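/- Fix p ∈ U with dα ≠ 0 at p and assume n ≥ 3. Assume P̃^l_{ijk}α_l = P^l_{ijk}α_l at every (x,y) ∈ U × (ℝ^n \ {0}). Write Gram(x,y) = X^i_m X^m X^s_i α_s · ( X^lα_l − (y^mα_m)²/(2E) ) − ( X^k X^j_k α_j )² (the Gram determinant with respect to g_{ij} of the vectors η^l = X^l − ((y^mα_m)/(2E)) y^l and X^sX^l_s). Assume the positive-curvature hypothesis: for every y with 2E(p,y) = 1 and Gram(p,y) ≠ 0, the quantity 1 + ( X^j X^s_j X^a X^c X^i_m X^m Q_{aisc} )(p,y) / Gram(p,y) is positive (by the Gauss equation this is the sectional curvature of the indicatrix {2E(p,·) = 1} along the plane spanned by the two vectors). Then Gram(p,y) = 0 for every y ≠ 0; that is, the vectors η^l and X^sX^l_s are linearly dependent at all nonzero y over p. -/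

import Mathlib

/-!
The proof concerns the single fiber over `p` and shows that `E p` is a quadratic form there. Then
`g_{ij}(p, y)`, and with it `X^l(p, y)`, does not depend on `y`, so `X^l_s = 0`, `W = 0`, and both
conclusions are immediate.

*From curvature to a quadratic form* (`exists_quadNorm`). The spray changes by
`G̃^l = G^l + (y^m α_m) y^l - E X^l` (`spray_confE`). Contracting with `α_l`, the invariance of the
mixed curvature says that `ψ = (y^m α_m)² - E X^l α_l` has vanishing third derivatives off the
origin. Its Hessian is thus constant on the connected set `y ≠ 0`, and since `ψ` is
`2`-homogeneous it is quadratic; hence `E X^l α_l = ½ B(y, y)` for a symmetric bilinear form `B`.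

*Rigidity* (`QuadNorm.rigid`). Write `φ = E p` and let `leg` be the inverse of the Legendre map
`dφ`. The Cauchy-Schwarz inequality for the Hessian gives `α(y)² ≤ B(y, y)`, with equality at the
pole `y₀ = leg α`; so `B` is positive definite and `B(y₀, ·) = 2 φ(y₀) α`. Take a `B`-unit vector
`v` with `α(v) = 0` and the curve `y(θ) = leg (cos θ α + sin θ B(v, ·))`, with energy
`e(θ) = φ(y(θ))`. The Legendre relations turn `φ · α(X) = ½ B(y, y)` into
`e (2 e - 2 sin θ cos θ e' + sin² θ e'') = ½ B(y, y)` (`circ_equation`), and Bessel's inequality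
bounds `B(y, y)` below by `α(y)² + B(v, y)² = 4 e² + e'²`. Therefore
`e (sin² θ e'' - 2 sin θ cos θ e') ≥ ½ e'²`.

Expanding the equation at the pole shows that on the kernel of `α` the Hessian of `φ` at `y₀` is
`B / (2 φ(y₀))` (`pole_hess`), so `e` is flat to second order where `sin θ = 0` (`deriv2_pole`).
The function `p = e' / (e sin² θ)` is then continuous on the whole circle and satisfies
`p' ≥ ½ cos(2θ) p²`; with periodicity this leaves only constant `e` (`deriv_eq_zero_of_periodic`).
For constant `e` the equation reads `2 φ(y₀) φ(y) = ½ B(y, y)` along the curve. The cones over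
these curves exhaust the fiber, as every covector lies in the plane of `α` and some `B(v, ·)`.
-/

/- Common framework: Finsler energies in local coordinates, following the paper's
   notation.  `x` is the base point, `y` the fiber (direction) variable. -/

noncomputable section
open scoped BigOperators

namespace FinslerConformal

/-- Vectors in local coordinates. -/
abbrev Vec (n : ℕ) := Fin n → ℝ

/-- Functions on `U × ℝⁿ`, written with separate base and fiber variables. -/
abbrev Fn (n : ℕ) := Vec n → Vec n → ℝ

variable {n : ℕ}

/-- Partial derivative in the fiber variable `y`, in direction `i`. -/
def pdy (i : Fin n) (f : Fn n) : Fn n :=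
  fun x y => fderiv ℝ (f x) y (Pi.single i 1)

/-- Partial derivative in the base variable `x`, in direction `i`. -/
def pdx (i : Fin n) (f : Fn n) : Fn n :=
  fun x y => fderiv ℝ (fun x' => f x' y) x (Pi.single i 1)

/-- Partial derivative `α_i = ∂α/∂x^i` of a function of the position only. -/
def pda (α : Vec n → ℝ) (i : Fin n) (x : Vec n) : ℝ :=
  fderiv ℝ α x (Pi.single i 1)

/-- Riemann–Finsler metric `g_{ij} = ∂²E/∂y^i∂y^j`. -/
def gdown (E : Fn n) (i j : Fin n) : Fn n := pdy i (pdy j E)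

/-- The Riemann–Finsler metric as a matrix. -/
def gmat (E : Fn n) (x y : Vec n) : Matrix (Fin n) (Fin n) ℝ :=
  Matrix.of fun i j => gdown E i j x y

/-- Inverse metric `g^{ij}`. -/
def gup (E : Fn n) (i j : Fin n) : Fn n := fun x y => (gmat E x y)⁻¹ i j

/-- First Cartan tensor `C_{ijk} = ∂g_{ij}/∂y^k`. -/
def cartanDown (E : Fn n) (i j k : Fin n) : Fn n := pdy k (gdown E i j)

/-- `C^l_{ij} = g^{lk} C_{ijk}`. -/
def cartanUp (E : Fn n) (l i j : Fin n) : Fn n :=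
  fun x y => ∑ k, gup E l k x y * cartanDown E i j k x y

/-- Geodesic spray coefficients
`G^l = ½ g^{lm}(y^k ∂²E/∂y^m∂x^k − ∂E/∂x^m)`. -/
def spray (E : Fn n) (l : Fin n) : Fn n :=
  fun x y => (1/2) * ∑ m, gup E l m x y *
    ((∑ k, y k * pdy m (pdx k E) x y) - pdx m E x y)

/-- `G^l_i = ∂G^l/∂y^i`. -/
def sprayD1 (E : Fn n) (l i : Fin n) : Fn n := pdy i (spray E l)

/-- `G^l_{ij} = ∂G^l_i/∂y^j`. -/
def sprayD2 (E : Fn n) (l i j : Fin n) : Fn n := pdy j (sprayD1 E l i)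

/-- `G^l_{ijk} = ∂G^l_{ij}/∂y^k`. -/
def sprayD3 (E : Fn n) (l i j k : Fin n) : Fn n := pdy k (sprayD2 E l i j)

/-- Mixed curvature of the Berwald connection `P^l_{ijk} = −G^l_{ijk}`. -/
def mixedCurv (E : Fn n) (l i j k : Fin n) : Fn n :=
  fun x y => - sprayD3 E l i j k x y

/-- Landsberg tensor
`P^l_{ij} = ½ g^{lm}(∂g_{jm}/∂x^i − 2G^k_i C_{jkm} − G^k_{ij} g_{km} − G^k_{im} g_{jk})`. -/
def landsberg (E : Fn n) (l i j : Fin n) : Fn n :=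
  fun x y => (1/2) * ∑ m, gup E l m x y *
    (pdx i (gdown E j m) x y
      - 2 * ∑ k, sprayD1 E k i x y * cartanDown E j k m x y
      - ∑ k, sprayD2 E k i j x y * gdown E k m x y
      - ∑ k, sprayD2 E k i m x y * gdown E j k x y)

/-- A Finsler energy on an open set `U ⊆ ℝⁿ`: `C^∞` on `U × (ℝⁿ \ {0})`,
positively 2-homogeneous in `y`, with positive definite fiberwise Hessian. -/
structure IsFinslerEnergy (U : Set (Vec n)) (E : Fn n) : Prop where
  smooth : ContDiffOn ℝ (⊤ : ℕ∞) (fun p : Vec n × Vec n => E p.1 p.2) (U ×ˢ {y : Vec n | y ≠ 0})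
  homog : ∀ x ∈ U, ∀ y : Vec n, y ≠ 0 → ∀ t : ℝ, 0 < t → E x (t • y) = t ^ 2 * E x y
  posdef : ∀ x ∈ U, ∀ y : Vec n, y ≠ 0 → (gmat E x y).PosDef

/-- Conformal change of the energy: `Ẽ = e^{2α} E`. -/
def confE (E : Fn n) (α : Vec n → ℝ) : Fn n :=
  fun x y => Real.exp (2 * α x) * E x y

/-- `X^l = g^{lm} α_m`. -/
def Xup (E : Fn n) (α : Vec n → ℝ) (l : Fin n) : Fn n :=
  fun x y => ∑ m, gup E l m x y * pda α m x

/-- `X^l_i = ∂X^l/∂y^i`. -/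
def XupD (E : Fn n) (α : Vec n → ℝ) (l i : Fin n) : Fn n := pdy i (Xup E α l)

/-- `X^l_{ij} = ∂²X^l/∂y^i∂y^j`. -/
def XupD2 (E : Fn n) (α : Vec n → ℝ) (l i j : Fin n) : Fn n := pdy j (XupD E α l i)

/-- Difference tensor of the mixed Berwald curvatures `B^l_{ijk} = G̃^l_{ijk} − G^l_{ijk}`. -/
def Bdiff (E : Fn n) (α : Vec n → ℝ) (l i j k : Fin n) : Fn n :=
  fun x y => sprayD3 (confE E α) l i j k x y - sprayD3 E l i j k x y

/-- vv-curvature of the Cartan connection `Q^l_{ijk} = C^l_{jm}C^m_{ik} − C^l_{im}C^m_{jk}`. -/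
def QUp (E : Fn n) (l i j k : Fin n) : Fn n :=
  fun x y => ∑ m, (cartanUp E l j m x y * cartanUp E m i k x y
    - cartanUp E l i m x y * cartanUp E m j k x y)

/-- Lowered vv-curvature `Q_{pijk} = g_{pl} Q^l_{ijk}`. -/
def QDown (E : Fn n) (p i j k : Fin n) : Fn n :=
  fun x y => ∑ l, gdown E p l x y * QUp E l i j k x y

/-- `y^m α_m`. -/
def yalpha (α : Vec n → ℝ) : Fn n := fun x y => ∑ m, y m * pda α m x

/-- `X^l α_l`, the Riemann–Finsler norm square of the gradient `X`. -/
def Xalpha (E : Fn n) (α : Vec n → ℝ) : Fn n :=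
  fun x y => ∑ l, Xup E α l x y * pda α l x

/-- Components of the projected vector field `η^l = X^l − ((y^mα_m)/(2E)) y^l`. -/
def etaUp (E : Fn n) (α : Vec n → ℝ) (l : Fin n) : Fn n :=
  fun x y => Xup E α l x y - (yalpha α x y / (2 * E x y)) * y l

/-- `η = η^l α_l = X^lα_l − (y^mα_m)²/(2E)`. -/
def etaSc (E : Fn n) (α : Vec n → ℝ) : Fn n :=
  fun x y => ∑ l, etaUp E α l x y * pda α l x

/-- `W^l = X^s X^l_s`. -/
def Wup (E : Fn n) (α : Vec n → ℝ) (l : Fin n) : Fn n :=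
  fun x y => ∑ s, Xup E α s x y * XupD E α l s x y

/-- The associated Riemannian energy `E_* = E · X^lα_l = E · g^{lm}α_lα_m`. -/
def Estar (E : Fn n) (α : Vec n → ℝ) : Fn n :=
  fun x y => E x y * Xalpha E α x y

/-- Riemannian gradient `X_*^l = g_*^{lk} α_k`, with respect to a Hessian matrix `gs`. -/
def Xstar (α : Vec n → ℝ) (gs : Matrix (Fin n) (Fin n) ℝ) (p : Vec n) : Vec n :=
  fun l => ∑ k, gs⁻¹ l k * pda α k p

/-- `b² = g_*^{kl} α_k α_l`. -/
def bsq (α : Vec n → ℝ) (gs : Matrix (Fin n) (Fin n) ℝ) (p : Vec n) : ℝ :=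
  ∑ k, ∑ l, gs⁻¹ k l * pda α k p * pda α l p

/-- The paper's Gram expression
`X^i_m X^m X^s_i α_s · ( X^lα_l − (y^mα_m)²/(2E) ) − ( X^k X^j_k α_j )²`. -/
def gramEtaW (E : Fn n) (α : Vec n → ℝ) : Fn n :=
  fun x y =>
    (∑ i, Wup E α i x y * ∑ s, XupD E α s i x y * pda α s x) *
      (Xalpha E α x y - (yalpha α x y) ^ 2 / (2 * E x y))
    - (∑ k, ∑ j, Xup E α k x y * XupD E α j k x y * pda α j x) ^ 2

/-- The curvature contraction `X^j X^s_j X^a X^c X^i_m X^m Q_{aisc}`. -/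
def Qcon (E : Fn n) (α : Vec n → ℝ) : Fn n :=
  fun x y => ∑ j, ∑ s, ∑ a, ∑ c, ∑ i,
    Xup E α j x y * XupD E α s j x y * Xup E α a x y * Xup E α c x y *
      Wup E α i x y * QDown E a i s c x y

/-- `θ = (X^l_s X^s α_l)/η`. -/
def thetaFn (E : Fn n) (α : Vec n → ℝ) : Fn n :=
  fun x y => (∑ l, Wup E α l x y * pda α l x) / etaSc E α x y

end FinslerConformal

/-! ### Minkowski energies and the Legendre map -/

namespace FinslerConformal

open Filter Topology Set
open scoped ContDiff

section Minkowski

variable {V : Type*} [NormedAddCommGroup V] [NormedSpace ℝ V]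

/-- A function on a vector space that is smooth off the origin and positively `2`-homogeneous;
nothing is assumed about the value at `0`. -/
structure TwoHomog (φ : V → ℝ) : Prop where
  smooth : ∀ y, y ≠ 0 → ContDiffAt ℝ ∞ φ y
  homog : ∀ y, y ≠ 0 → ∀ t : ℝ, 0 < t → φ (t • y) = t ^ 2 * φ y

/-- A Minkowski energy: what a Finsler energy is on a single fiber. -/
structure MinkEnergy (φ : V → ℝ) : Prop extends TwoHomog φ where
  pos : ∀ y, y ≠ 0 → ∀ v, v ≠ 0 → 0 < fderiv ℝ (fderiv ℝ φ) y v v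

namespace TwoHomog

variable {φ : V → ℝ} (h : TwoHomog φ)
include h

lemma smooth_fderiv {y : V} (hy : y ≠ 0) : ContDiffAt ℝ ∞ (fderiv ℝ φ) y :=
  (h.smooth y hy).fderiv_right (m := ∞) (by simp)

lemma hasFDerivAt {y : V} (hy : y ≠ 0) : HasFDerivAt φ (fderiv ℝ φ y) y :=
  ((h.smooth y hy).differentiableAt (by simp)).hasFDerivAt

lemma hasFDerivAt_fderiv {y : V} (hy : y ≠ 0) :
    HasFDerivAt (fderiv ℝ φ) (fderiv ℝ (fderiv ℝ φ) y) y :=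
  ((h.smooth_fderiv hy).differentiableAt (by simp)).hasFDerivAt

lemma symm {y : V} (hy : y ≠ 0) (v w : V) :
    fderiv ℝ (fderiv ℝ φ) y v w = fderiv ℝ (fderiv ℝ φ) y w v :=
  (h.smooth y hy).isSymmSndFDerivAt
    (by simp; exact WithTop.coe_le_coe.2 (le_top (a := (2 : ℕ∞)))) v w

lemma fderiv_smul {y : V} (hy : y ≠ 0) {t : ℝ} (ht : 0 < t) :
    fderiv ℝ φ (t • y) = t • fderiv ℝ φ y := by
  have h1 : HasFDerivAt (fun z : V => φ (t • z)) (t • fderiv ℝ φ (t • y)) y := by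
    have := (h.hasFDerivAt (smul_ne_zero ht.ne' hy)).comp y
      ((hasFDerivAt_id (𝕜 := ℝ) y).const_smul t)
    refine this.congr_fderiv ?_
    ext v; simp
  have h2 : HasFDerivAt (fun z : V => φ (t • z)) (t ^ 2 • fderiv ℝ φ y) y := by
    refine ((h.hasFDerivAt hy).const_mul (t ^ 2)).congr_of_eventuallyEq ?_
    filter_upwards [isOpen_ne.mem_nhds hy] with z hz using h.homog z hz t ht
  have h3 := h1.unique h2
  have : t • fderiv ℝ φ (t • y) = t • (t • fderiv ℝ φ y) := by
    rw [h3, smul_smul, sq]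
  exact smul_right_injective _ ht.ne' this

lemma hess_self {y : V} (hy : y ≠ 0) :
    fderiv ℝ (fderiv ℝ φ) y y = fderiv ℝ φ y := by
  have hc : HasDerivAt (fun t : ℝ => t • y) y 1 := by
    simpa using (hasDerivAt_id (1 : ℝ)).smul_const y
  have h1 : HasDerivAt (fun t : ℝ => fderiv ℝ φ (t • y)) (fderiv ℝ (fderiv ℝ φ) y y) 1 := by
    have : HasFDerivAt (fderiv ℝ φ) (fderiv ℝ (fderiv ℝ φ) y) ((1 : ℝ) • y) := by
      rw [one_smul]; exact h.hasFDerivAt_fderiv hy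
    exact this.comp_hasDerivAt (1 : ℝ) hc
  have h2 : HasDerivAt (fun t : ℝ => fderiv ℝ φ (t • y)) (fderiv ℝ φ y) 1 := by
    have : HasDerivAt (fun t : ℝ => t • fderiv ℝ φ y) (fderiv ℝ φ y) 1 := by
      simpa using (hasDerivAt_id (1 : ℝ)).smul_const (fderiv ℝ φ y)
    refine this.congr_of_eventuallyEq ?_
    filter_upwards [lt_mem_nhds (one_pos : (0 : ℝ) < 1)] with t ht using h.fderiv_smul hy ht
  exact h1.unique h2

lemma fderiv_self {y : V} (hy : y ≠ 0) : fderiv ℝ φ y y = 2 * φ y := by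
  have hc : HasDerivAt (fun t : ℝ => t • y) y 1 := by
    simpa using (hasDerivAt_id (1 : ℝ)).smul_const y
  have h1 : HasDerivAt (fun t : ℝ => φ (t • y)) (fderiv ℝ φ y y) 1 := by
    have : HasFDerivAt φ (fderiv ℝ φ y) ((1 : ℝ) • y) := by
      rw [one_smul]; exact h.hasFDerivAt hy
    exact this.comp_hasDerivAt (1 : ℝ) hc
  have h2 : HasDerivAt (fun t : ℝ => φ (t • y)) (2 * φ y) 1 := by
    have : HasDerivAt (fun t : ℝ => t ^ 2 * φ y) (2 * φ y) 1 := by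
      simpa using (hasDerivAt_pow 2 (1 : ℝ)).mul_const (φ y)
    refine this.congr_of_eventuallyEq ?_
    filter_upwards [lt_mem_nhds (one_pos : (0 : ℝ) < 1)] with t ht using h.homog y hy t ht
  exact h1.unique h2

lemma hess_smul {y : V} (hy : y ≠ 0) {t : ℝ} (ht : 0 < t) :
    fderiv ℝ (fderiv ℝ φ) (t • y) = fderiv ℝ (fderiv ℝ φ) y := by
  have h1 : HasFDerivAt (fun z : V => fderiv ℝ φ (t • z))
      (t • fderiv ℝ (fderiv ℝ φ) (t • y)) y := by
    have := (h.hasFDerivAt_fderiv (smul_ne_zero ht.ne' hy)).comp y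
      ((hasFDerivAt_id (𝕜 := ℝ) y).const_smul t)
    refine this.congr_fderiv ?_
    ext v w; simp
  have h2 : HasFDerivAt (fun z : V => fderiv ℝ φ (t • z)) (t • fderiv ℝ (fderiv ℝ φ) y) y := by
    refine ((h.hasFDerivAt_fderiv hy).const_smul t).congr_of_eventuallyEq ?_
    filter_upwards [isOpen_ne.mem_nhds hy] with z hz using h.fderiv_smul hz ht
  exact smul_right_injective _ ht.ne' (h1.unique h2)

end TwoHomog

namespace MinkEnergy

variable {φ : V → ℝ} (h : MinkEnergy φ)
include h

lemma energy_pos {y : V} (hy : y ≠ 0) : 0 < φ y := by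
  have := h.pos y hy y hy
  rw [h.hess_self hy, h.fderiv_self hy] at this
  linarith

lemma fderiv_ne_zero {y : V} (hy : y ≠ 0) : fderiv ℝ φ y ≠ 0 := fun h0 => by
  have := h.fderiv_self hy
  have h1 := h.energy_pos hy
  rw [h0] at this
  simp at this
  linarith

lemma hess_injective {y : V} (hy : y ≠ 0) {v w : V}
    (hvw : fderiv ℝ (fderiv ℝ φ) y v = fderiv ℝ (fderiv ℝ φ) y w) : v = w := by
  by_contra hne
  have := h.pos y hy (v - w) (sub_ne_zero.2 hne)
  simp only [map_sub (fderiv ℝ (fderiv ℝ φ) y), hvw, sub_self] at this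
  simp at this

/-- The Legendre map is injective: along a segment avoiding the origin the pairing of `dφ` with
the direction is strictly increasing, and a segment through the origin is ruled out by the sign
of `dφ y y = 2 φ y`. -/
lemma fderiv_injective {y z : V} (hy : y ≠ 0) (hz : z ≠ 0)
    (hyz : fderiv ℝ φ y = fderiv ℝ φ z) : y = z := by
  by_contra hne
  set v := z - y with hv
  have hv0 : v ≠ 0 := sub_ne_zero.2 (Ne.symm hne)
  by_cases hseg : ∀ t ∈ Icc (0 : ℝ) 1, y + t • v ≠ 0
  · have hd : ∀ t ∈ Icc (0 : ℝ) 1, HasDerivAt (fun t : ℝ => fderiv ℝ φ (y + t • v) v)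
        (fderiv ℝ (fderiv ℝ φ) (y + t • v) v v) t := by
      intro t ht
      have hc : HasDerivAt (fun t : ℝ => y + t • v) v t := by
        simpa using ((hasDerivAt_id t).smul_const v).const_add y
      have := (h.hasFDerivAt_fderiv (hseg t ht)).comp_hasDerivAt t hc
      simpa using this.clm_apply (hasDerivAt_const t v)
    have hmono : StrictMonoOn (fun t : ℝ => fderiv ℝ φ (y + t • v) v) (Icc 0 1) := by
      refine strictMonoOn_of_deriv_pos (convex_Icc 0 1)
        (fun t ht => (hd t ht).continuousAt.continuousWithinAt) ?_
      intro t ht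
      have ht' := interior_subset ht
      rw [(hd t ht').deriv]
      exact h.pos _ (hseg t ht') v hv0
    have := hmono (left_mem_Icc.2 zero_le_one) (right_mem_Icc.2 zero_le_one) zero_lt_one
    simp [hv, hyz] at this
  · push Not at hseg
    obtain ⟨t, ⟨h0, h1⟩, ht⟩ := hseg
    have hrel : (1 - t) • y = -(t • z) := by
      rw [eq_neg_iff_add_eq_zero, ← ht, hv]; module
    have e1 := congrArg (fderiv ℝ φ y) hrel
    rw [map_smul, map_neg, map_smul, h.fderiv_self hy, hyz, h.fderiv_self hz] at e1
    simp only [smul_eq_mul] at e1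
    have p1 := h.energy_pos hy
    have p2 := h.energy_pos hz
    rcases h0.eq_or_lt with h0 | h0
    · subst h0; nlinarith
    · nlinarith [mul_pos h0 p2, mul_nonneg (sub_nonneg.2 h1) p1.le]

variable [FiniteDimensional ℝ V]

/-- The Legendre map is onto the nonzero covectors: `dφ` is proportional to `ξ` at a maximum of
the `0`-homogeneous function `ξ / √φ`. -/
lemma fderiv_surjective {ξ : V →L[ℝ] ℝ} (hξ : ξ ≠ 0) : ∃ y, y ≠ 0 ∧ fderiv ℝ φ y = ξ := by
  obtain ⟨y0, hy0⟩ : ∃ y, 0 < ξ y := by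
    obtain ⟨y, hy⟩ := DFunLike.ne_iff.1 hξ
    rcases lt_or_gt_of_ne hy with hy | hy
    · exact ⟨-y, by simpa using hy⟩
    · exact ⟨y, by simpa using hy⟩
  have hne : ∀ y, 0 < ξ y → y ≠ 0 := by rintro y hy rfl; simp at hy
  have hsne : ∀ y ∈ Metric.sphere (0 : V) 1, y ≠ 0 := by
    intro y hy; exact ne_zero_of_mem_unit_sphere ⟨y, hy⟩
  obtain ⟨m, hmS, hm⟩ := (isCompact_sphere (0 : V) 1).exists_isMaxOn
    ⟨‖y0‖⁻¹ • y0, by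
      have : ‖y0‖ ≠ 0 := norm_ne_zero_iff.2 (hne y0 hy0)
      simp [norm_smul, this]⟩
    (f := fun y => ξ y / √(φ y)) (fun y hy => by
      have h1 := (h.smooth y (hsne y hy)).continuousAt
      have h2 := h.energy_pos (hsne y hy)
      exact (ξ.continuous.continuousAt.div h1.sqrt
        (Real.sqrt_pos.2 h2).ne').continuousWithinAt)
  have hm0 := hsne m hmS
  set M := ξ m / √(φ m) with hM
  have hmax : ∀ y, y ≠ 0 → ξ y ≤ M * √(φ y) := by
    intro y hy
    have hn : 0 < ‖y‖ := norm_pos_iff.2 hy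
    have h1 : ‖y‖⁻¹ • y ∈ Metric.sphere (0 : V) 1 := by simp [norm_smul, hn.ne']
    have h2 : ξ (‖y‖⁻¹ • y) / √(φ (‖y‖⁻¹ • y)) ≤ M := hm h1
    rw [h.homog y hy _ (inv_pos.2 hn), Real.sqrt_mul (sq_nonneg _),
      Real.sqrt_sq (inv_pos.2 hn).le, map_smul, smul_eq_mul,
      mul_div_mul_left _ _ (inv_pos.2 hn).ne', div_le_iff₀ (Real.sqrt_pos.2 (h.energy_pos hy))] at h2
    exact h2
  have hMpos : 0 < M := by
    have h1 := hmax y0 (hne y0 hy0)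
    have h2 := Real.sqrt_pos.2 (h.energy_pos (hne y0 hy0))
    by_contra hc
    nlinarith
  have hφm := h.energy_pos hm0
  have hξm : ξ m = M * √(φ m) := by
    rw [hM, div_mul_cancel₀ _ (Real.sqrt_pos.2 hφm).ne']
  have hξm0 : 0 < ξ m := by rw [hξm]; exact mul_pos hMpos (Real.sqrt_pos.2 hφm)
  have hmin : IsLocalMin (fun y => M ^ 2 * φ y - ξ y * ξ y) m := by
    filter_upwards [ξ.continuous.continuousAt.eventually (lt_mem_nhds hξm0)] with y hy
    have h1 := hmax y (hne y hy)
    have h2 := Real.sq_sqrt (h.energy_pos (hne y hy)).le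
    have h3 := Real.sq_sqrt hφm.le
    have h4 : ξ y * ξ y ≤ M ^ 2 * φ y := by rw [← h2]; nlinarith
    have h5 : ξ m * ξ m = M ^ 2 * φ m := by rw [← h3, hξm]; ring
    linarith
  have hder := hmin.hasFDerivAt_eq_zero
    (((h.hasFDerivAt hm0).const_mul (M ^ 2)).sub (ξ.hasFDerivAt.mul ξ.hasFDerivAt))
  have hc : 0 < M ^ 2 / (2 * ξ m) := by positivity
  refine ⟨(M ^ 2 / (2 * ξ m)) • m, smul_ne_zero hc.ne' hm0, ?_⟩
  rw [h.fderiv_smul hm0 hc]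
  ext v
  have := DFunLike.congr_fun hder v
  simp at this ⊢
  field_simp
  linarith

/-- The inverse of the Legendre map `dφ` (with value `0` at the zero covector). -/
def leg (_ : MinkEnergy φ) (ξ : V →L[ℝ] ℝ) : V :=
  open Classical in if hξ : ∃ y, y ≠ 0 ∧ fderiv ℝ φ y = ξ then hξ.choose else 0

lemma leg_ne {ξ : V →L[ℝ] ℝ} (hξ : ξ ≠ 0) : h.leg ξ ≠ 0 := by
  have := h.fderiv_surjective hξ
  rw [leg, dif_pos this]; exact this.choose_spec.1

lemma fderiv_leg {ξ : V →L[ℝ] ℝ} (hξ : ξ ≠ 0) : fderiv ℝ φ (h.leg ξ) = ξ := by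
  have := h.fderiv_surjective hξ
  rw [leg, dif_pos this]; exact this.choose_spec.2

lemma leg_fderiv {y : V} (hy : y ≠ 0) : h.leg (fderiv ℝ φ y) = y :=
  h.fderiv_injective (h.leg_ne (h.fderiv_ne_zero hy)) hy (h.fderiv_leg (h.fderiv_ne_zero hy))

lemma exists_equiv {y : V} (hy : y ≠ 0) :
    ∃ e : V ≃L[ℝ] (V →L[ℝ] ℝ), (e : V →L[ℝ] (V →L[ℝ] ℝ)) = fderiv ℝ (fderiv ℝ φ) y := by
  have hfr : Module.finrank ℝ V = Module.finrank ℝ (V →L[ℝ] ℝ) := by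
    rw [← (LinearMap.toContinuousLinearMap (𝕜 := ℝ) (E := V) (F' := ℝ)).finrank_eq]
    exact (Subspace.dual_finrank_eq (K := ℝ) (V := V)).symm
  refine ⟨(LinearMap.linearEquivOfInjective (fderiv ℝ (fderiv ℝ φ) y : V →ₗ[ℝ] (V →L[ℝ] ℝ))
    (fun v w hvw => h.hess_injective hy hvw) hfr).toContinuousLinearEquiv, ?_⟩
  ext v w
  rfl

lemma smooth_leg {ξ : V →L[ℝ] ℝ} (hξ : ξ ≠ 0) : ContDiffAt ℝ ∞ h.leg ξ := by
  have hy := h.leg_ne hξ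
  obtain ⟨e, he⟩ := h.exists_equiv hy
  have hs := h.smooth_fderiv hy
  have hd : HasFDerivAt (fderiv ℝ φ) (e : V →L[ℝ] (V →L[ℝ] ℝ)) (h.leg ξ) := by
    rw [he]; exact h.hasFDerivAt_fderiv hy
  have hloc := hs.to_localInverse hd (by simp)
  have hright := (hs.hasStrictFDerivAt' hd (by simp)).eventually_right_inverse
  have himg := hs.localInverse_apply_image hd (by simp)
  rw [h.fderiv_leg hξ] at hloc hright himg
  have hne : ∀ᶠ η in 𝓝 ξ, hs.localInverse hd (by simp) η ≠ 0 :=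
    hloc.continuousAt.eventually_ne (by rw [himg]; exact hy)
  refine hloc.congr_of_eventuallyEq ?_
  filter_upwards [hright, hne] with η h1 h2
  have h1' : fderiv ℝ φ (hs.localInverse hd (by simp) η) = η := h1
  conv_lhs => rw [← h1']
  exact h.leg_fderiv h2

end MinkEnergy

end Minkowski

end FinslerConformal

/-! ### A differential inequality on the circle -/

namespace FinslerConformal

open Filter Topology Set
open scoped ContDiff

section Circle

/-- A periodic solution `e > 0` of `e (e'' sin² - 2 e' sin cos) ≥ e'² / 2` which is flat to second
order at the zeros of `sin` is constant. The function `p = e' / (e sin²)` extends continuously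
over the zeros of `sin` and satisfies `p' ≥ (1/2) cos(2θ) p²`, so that `p exp(-K)` is nondecreasing
for `K' = (1/2) cos(2θ) p`. Whatever the sign of `p(0) = p(2π)`, it is shared weakly by `p` on
`[0, 2π]`; thus `e` is monotone there, and constant by periodicity. -/
lemma deriv_eq_zero_of_periodic {e : ℝ → ℝ} (hs : ContDiff ℝ ∞ e) (hpos : ∀ θ, 0 < e θ)
    (hper : ∀ θ, e (θ + 2 * Real.pi) = e θ)
    (hineq : ∀ θ, 1 / 2 * deriv e θ ^ 2 ≤
      e θ * (Real.sin θ ^ 2 * deriv (deriv e) θ - 2 * Real.sin θ * Real.cos θ * deriv e θ))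
    (h2 : ∀ θ, Real.sin θ = 0 → deriv (deriv e) θ = 0) :
    ∀ θ, deriv e θ = 0 := by
  have hs1 : ContDiff ℝ ∞ (deriv e) := (contDiff_infty_iff_deriv.1 hs).2
  have hs2 : ContDiff ℝ ∞ (deriv (deriv e)) := (contDiff_infty_iff_deriv.1 hs1).2
  have hs3 : ContDiff ℝ ∞ (deriv (deriv (deriv e))) := (contDiff_infty_iff_deriv.1 hs2).2
  have hd0 : ∀ θ, HasDerivAt e (deriv e θ) θ := fun θ =>
    (hs.differentiable (by simp) θ).hasDerivAt
  have hd1 : ∀ θ, HasDerivAt (deriv e) (deriv (deriv e) θ) θ := fun θ =>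
    (hs1.differentiable (by simp) θ).hasDerivAt
  have hd2 : ∀ θ, HasDerivAt (deriv (deriv e)) (deriv (deriv (deriv e)) θ) θ := fun θ =>
    (hs2.differentiable (by simp) θ).hasDerivAt
  have hdper : ∀ {f : ℝ → ℝ}, (∀ θ, f (θ + 2 * Real.pi) = f θ) →
      ∀ θ, deriv f (θ + 2 * Real.pi) = deriv f θ := by
    intro f hf θ
    rw [← deriv_comp_add_const]
    congr 1; funext x; exact hf x
  have hper1 := hdper hper
  have hper3 := hdper (hdper hper1)
  have h1 : ∀ θ, Real.sin θ = 0 → deriv e θ = 0 := by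
    intro θ h0
    have := hineq θ
    rw [h0] at this
    nlinarith [sq_nonneg (deriv e θ)]
  set p : ℝ → ℝ := fun θ => if Real.sin θ = 0 then deriv (deriv (deriv e)) θ / 2 / e θ
    else deriv e θ / Real.sin θ ^ 2 / e θ with hp
  have hpper : p (2 * Real.pi) = p 0 := by
    have a1 := hper3 0
    have a2 := hper 0
    rw [zero_add] at a1 a2
    simp [hp, a1, a2]
  have hpne : ∀ θ, Real.sin θ ≠ 0 →
      p =ᶠ[𝓝 θ] fun x => deriv e x / Real.sin x ^ 2 / e x := by
    intro θ hθ
    filter_upwards [Real.continuous_sin.continuousAt.eventually_ne hθ] with x hx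
    simp [hp, hx]
  have hsin0 : ∀ θ, Real.sin θ = 0 → ∀ᶠ x in 𝓝[≠] θ, Real.sin x ≠ 0 := by
    intro θ hθ
    have hc : Real.cos θ ≠ 0 := by
      intro hc; have := Real.sin_sq_add_cos_sq θ; rw [hθ, hc] at this; norm_num at this
    simpa [hθ] using (Real.hasDerivAt_sin θ).eventually_ne (c := 0) hc
  have hpcont : Continuous p := by
    rw [continuous_iff_continuousAt]
    intro θ
    by_cases hθ : Real.sin θ = 0
    · have hc : Real.cos θ ≠ 0 := by
        intro hc; have := Real.sin_sq_add_cos_sq θ; rw [hθ, hc] at this; norm_num at this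
      have hT1 : Tendsto (fun x => deriv (deriv e) x / Real.sin x) (𝓝[≠] θ)
          (𝓝 (deriv (deriv (deriv e)) θ / Real.cos θ)) := by
        have a := hasDerivAt_iff_tendsto_slope.1 (hd2 θ)
        have b := hasDerivAt_iff_tendsto_slope.1 (Real.hasDerivAt_sin θ)
        refine (a.div b hc).congr' ?_
        filter_upwards [self_mem_nhdsWithin] with x hx
        have hx' : x - θ ≠ 0 := sub_ne_zero.2 hx
        simp only [Pi.div_apply, slope_def_field, h2 θ hθ, hθ, sub_zero]
        field_simp
      have hT2 : Tendsto (fun x => deriv e x / Real.sin x ^ 2) (𝓝[≠] θ)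
          (𝓝 (deriv (deriv (deriv e)) θ / 2)) := by
        refine HasDerivAt.lhopital_zero_nhdsNE (f' := deriv (deriv e))
          (g' := fun x => 2 * Real.sin x * Real.cos x) (Eventually.of_forall hd1)
          (Eventually.of_forall fun x => by
            have := (Real.hasDerivAt_sin x).pow 2
            simp only [Nat.cast_ofNat, Nat.add_one_sub_one, pow_one] at this
            exact this) ?_ ?_ ?_ ?_
        · filter_upwards [hsin0 θ hθ, (Real.continuous_cos.continuousAt.eventually_ne
            hc).filter_mono nhdsWithin_le_nhds] with x hx hx'
          simp [hx, hx']
        · have := (hs1.continuous.tendsto θ).mono_left (nhdsWithin_le_nhds (s := {θ}ᶜ))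
          rwa [h1 θ hθ] at this
        · have := ((Real.continuous_sin.pow 2).tendsto θ).mono_left
            (nhdsWithin_le_nhds (s := {θ}ᶜ))
          simp only [Pi.pow_apply, hθ, ne_eq, OfNat.ofNat_ne_zero, not_false_eq_true,
            zero_pow] at this
          exact this
        · have hcc : Tendsto (fun x => 2 * Real.cos x) (𝓝[≠] θ) (𝓝 (2 * Real.cos θ)) :=
            ((continuous_const.mul Real.continuous_cos).tendsto θ).mono_left nhdsWithin_le_nhds
          have := hT1.div hcc (mul_ne_zero two_ne_zero hc)
          have hval : deriv (deriv (deriv e)) θ / Real.cos θ / (2 * Real.cos θ)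
              = deriv (deriv (deriv e)) θ / 2 := by
            have hc2 : Real.cos θ ^ 2 = 1 := by
              have := Real.sin_sq_add_cos_sq θ; rw [hθ] at this; linarith
            rw [div_div, show Real.cos θ * (2 * Real.cos θ) = 2 * Real.cos θ ^ 2 by ring, hc2,
              mul_one]
          rw [hval] at this
          refine this.congr fun x => ?_
          simp only [Pi.div_apply]
          rw [div_div]; congr 1; ring
      rw [continuousAt_iff_punctured_nhds]
      have hT3 := hT2.div ((hs.continuous.tendsto θ).mono_left (nhdsWithin_le_nhds (s := {θ}ᶜ)))
        (hpos θ).ne'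
      have hpθ : p θ = deriv (deriv (deriv e)) θ / 2 / e θ := by simp [hp, hθ]
      rw [hpθ]
      refine hT3.congr' ?_
      filter_upwards [hsin0 θ hθ] with x hx
      simp [hp, hx]
    · exact ((hs1.continuous.continuousAt.div (Real.continuous_sin.pow 2).continuousAt
        (pow_ne_zero 2 hθ)).div hs.continuous.continuousAt (hpos θ).ne').congr (hpne θ hθ).symm
  set K : ℝ → ℝ := fun θ => ∫ x in (0 : ℝ)..θ, 1 / 2 * p x * (1 - 2 * Real.sin x ^ 2) with hK
  have hKd : ∀ θ, HasDerivAt K (1 / 2 * p θ * (1 - 2 * Real.sin θ ^ 2)) θ := by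
    intro θ
    have hc : Continuous fun x => 1 / 2 * p x * (1 - 2 * Real.sin x ^ 2) := by fun_prop
    exact hc.integral_hasStrictDerivAt 0 θ |>.hasDerivAt
  have hKc : Continuous K := continuous_iff_continuousAt.2 fun θ => (hKd θ).continuousAt
  set P : ℝ → ℝ := fun θ => p θ * Real.exp (-K θ) with hP
  have hPc : Continuous P := hpcont.mul (Real.continuous_exp.comp hKc.neg)
  have hPd : ∀ θ, Real.sin θ ≠ 0 → ∃ d, 0 ≤ d ∧ HasDerivAt P d θ := by
    intro θ hθ
    have hq := (((hd1 θ).div ((Real.hasDerivAt_sin θ).pow 2) (pow_ne_zero 2 hθ)).div (hd0 θ)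
      (hpos θ).ne').congr_of_eventuallyEq (hpne θ hθ)
    refine ⟨_, ?_, hq.mul ((hKd θ).neg.exp)⟩
    have hpθ : p θ = deriv e θ / Real.sin θ ^ 2 / e θ := by simp [hp, hθ]
    have hE := Real.exp_pos (-K θ)
    have hi := hineq θ
    have he := hpos θ
    have hs4 : 0 < Real.sin θ ^ 2 := by positivity
    have key : 0 ≤ (e θ * (Real.sin θ ^ 2 * deriv (deriv e) θ
        - 2 * Real.sin θ * Real.cos θ * deriv e θ) - 1 / 2 * deriv e θ ^ 2) /
          (e θ ^ 2 * Real.sin θ ^ 4) * Real.exp (-K θ) := by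
      have : 0 ≤ e θ * (Real.sin θ ^ 2 * deriv (deriv e) θ
        - 2 * Real.sin θ * Real.cos θ * deriv e θ) - 1 / 2 * deriv e θ ^ 2 := by linarith
      positivity
    convert key using 1
    rw [hpθ]
    simp only [Pi.pow_apply, Pi.div_apply, Pi.neg_apply]
    field_simp
    push_cast
    ring
  have hmono : ∀ a b : ℝ, (∀ x ∈ Ioo a b, Real.sin x ≠ 0) → MonotoneOn P (Icc a b) := by
    intro a b hab
    refine monotoneOn_of_deriv_nonneg (convex_Icc a b) hPc.continuousOn ?_ ?_
    · intro x hx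
      rw [interior_Icc] at hx
      obtain ⟨d, -, hd⟩ := hPd x (hab x hx)
      exact hd.differentiableAt.differentiableWithinAt
    · intro x hx
      rw [interior_Icc] at hx
      obtain ⟨d, hd0, hd⟩ := hPd x (hab x hx)
      rw [hd.deriv]; exact hd0
  have hpi := Real.pi_pos
  have hm1 : MonotoneOn P (Icc 0 Real.pi) :=
    hmono _ _ fun x hx => (Real.sin_pos_of_mem_Ioo hx).ne'
  have hm2 : MonotoneOn P (Icc Real.pi (2 * Real.pi)) := by
    refine hmono _ _ fun x hx => ?_
    have : 0 < Real.sin (x - Real.pi) :=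
      Real.sin_pos_of_pos_of_lt_pi (by linarith [hx.1]) (by linarith [hx.2])
    rw [Real.sin_sub_pi] at this
    linarith
  have hm : MonotoneOn P (Icc 0 (2 * Real.pi)) := by
    have hu : Icc 0 (2 * Real.pi) = Icc 0 Real.pi ∪ Icc Real.pi (2 * Real.pi) :=
      (Icc_union_Icc_eq_Icc hpi.le (by linarith)).symm
    rw [hu]
    exact hm1.union_right hm2 (isGreatest_Icc hpi.le) (isLeast_Icc (by linarith))
  have hsgn : ∀ θ, 0 < P θ ↔ 0 < p θ := fun θ => by
    simp only [hP]; exact mul_pos_iff_of_pos_right (Real.exp_pos _)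
  have hsgn' : ∀ θ, P θ < 0 ↔ p θ < 0 := fun θ => by
    simp only [hP]
    rw [← neg_pos, ← neg_mul, mul_pos_iff_of_pos_right (Real.exp_pos _), neg_pos]
  have m0 : (0 : ℝ) ∈ Icc 0 (2 * Real.pi) := ⟨le_rfl, by linarith⟩
  have m2 : 2 * Real.pi ∈ Icc 0 (2 * Real.pi) := ⟨by linarith, le_rfl⟩
  have hep : ∀ θ, Real.sin θ ≠ 0 → deriv e θ = p θ * (Real.sin θ ^ 2 * e θ) := by
    intro θ hθ
    have := (hpos θ).ne'
    simp only [hp, hθ, if_false]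
    field_simp
  have hper0 : e (2 * Real.pi) = e 0 := by simpa using hper 0
  have he_mono : (∀ x ∈ Icc 0 (2 * Real.pi), 0 ≤ p x) → MonotoneOn e (Icc 0 (2 * Real.pi)) := by
    intro hx
    refine monotoneOn_of_deriv_nonneg (convex_Icc _ _) hs.continuous.continuousOn
      (hs.differentiable (by simp)).differentiableOn fun x hx' => ?_
    by_cases h0 : Real.sin x = 0
    · rw [h1 x h0]
    · rw [hep x h0]
      exact mul_nonneg (hx x (interior_subset hx')) (mul_nonneg (sq_nonneg _) (hpos x).le)
  have he_anti : (∀ x ∈ Icc 0 (2 * Real.pi), p x ≤ 0) → AntitoneOn e (Icc 0 (2 * Real.pi)) := by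
    intro hx
    refine antitoneOn_of_deriv_nonpos (convex_Icc _ _) hs.continuous.continuousOn
      (hs.differentiable (by simp)).differentiableOn fun x hx' => ?_
    by_cases h0 : Real.sin x = 0
    · rw [h1 x h0]
    · rw [hep x h0]
      exact mul_nonpos_of_nonpos_of_nonneg (hx x (interior_subset hx'))
        (mul_nonneg (sq_nonneg _) (hpos x).le)
  have hconst : (∀ x ∈ Icc 0 (2 * Real.pi), e x = e 0) →
      ∀ x ∈ Icc 0 (2 * Real.pi), deriv e x = 0 := by
    intro hx x hx'
    have : EqOn (deriv e) (fun _ => 0) (Ioo 0 (2 * Real.pi)) := by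
      intro y hy
      have : e =ᶠ[𝓝 y] fun _ => e 0 := by
        filter_upwards [isOpen_Ioo.mem_nhds hy] with z hz using hx z ⟨hz.1.le, hz.2.le⟩
      rw [this.deriv_eq]; simp
    have hcl := this.closure hs1.continuous continuous_const
    rw [closure_Ioo (by positivity)] at hcl
    exact hcl hx'
  have main : ∀ x ∈ Icc 0 (2 * Real.pi), deriv e x = 0 := by
    apply hconst
    -- A nonnegative sign of `p` propagates forward from `0`, a negative one backward from `2π`.
    rcases le_or_gt 0 (p 0) with h0 | h0
    · have hx : ∀ x ∈ Icc 0 (2 * Real.pi), 0 ≤ p x := fun x hx => by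
        by_contra hc
        have a := hm m0 hx hx.1
        have b := (hsgn' x).2 (not_le.1 hc)
        exact absurd ((hsgn' 0).1 (a.trans_lt b)) (not_lt.2 h0)
      intro x hx'
      have := he_mono hx
      have a := this m0 hx' hx'.1
      have b := this hx' m2 hx'.2
      linarith
    · have hx : ∀ x ∈ Icc 0 (2 * Real.pi), p x ≤ 0 := fun x hx => by
        by_contra hc
        have a := hm hx m2 hx.2
        have b := (hsgn x).2 (not_le.1 hc)
        have := (hsgn _).1 (b.trans_le a)
        rw [hpper] at this
        linarith
      intro x hx'
      have := he_anti hx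
      have a := this m0 hx' hx'.1
      have b := this hx' m2 hx'.2
      linarith
  intro θ
  have hP1 : Function.Periodic (deriv e) (2 * Real.pi) := hper1
  obtain ⟨y, hy, hyθ⟩ := hP1.exists_mem_Ico₀ (by positivity) θ
  rw [hyθ]
  exact main y ⟨hy.1, hy.2.le⟩

end Circle

end FinslerConformal

/-! ### Rigidity of a fiber energy -/

namespace FinslerConformal

open Filter Topology Set
open scoped ContDiff

section Rigidity

variable {V : Type*} [NormedAddCommGroup V] [NormedSpace ℝ V]

/-- The unit circle in the plane of covectors spanned by `α` and `ζ`. Its derivative is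
`circ ζ (-α)`. -/
def circ (α ζ : V →L[ℝ] ℝ) (θ : ℝ) : V →L[ℝ] ℝ := Real.cos θ • α + Real.sin θ • ζ

lemma circ_hasDerivAt (α ζ : V →L[ℝ] ℝ) (θ : ℝ) :
    HasDerivAt (circ α ζ) (circ ζ (-α) θ) θ := by
  refine (((Real.hasDerivAt_cos θ).smul_const α).add
    ((Real.hasDerivAt_sin θ).smul_const ζ)).congr_deriv ?_
  simp only [circ]; module

lemma circ_contDiff (α ζ : V →L[ℝ] ℝ) : ContDiff ℝ ∞ (circ α ζ) :=
  (Real.contDiff_cos.smul contDiff_const).add (Real.contDiff_sin.smul contDiff_const)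

/-- The equation `E · g^{lm} α_l α_m = ½ B(y, y)` on one fiber, with `X = g^{lm} α_m` encoded as
the Hessian-preimage of `α`. -/
structure QuadNorm (φ : V → ℝ) (α : V →L[ℝ] ℝ) (B : V →L[ℝ] V →L[ℝ] ℝ) : Prop where
  ne : α ≠ 0
  symm : ∀ v w, B v w = B w v
  eq : ∀ y, y ≠ 0 → ∃ X, fderiv ℝ (fderiv ℝ φ) y X = α ∧ φ y * α X = 1 / 2 * B y y

variable {φ : V → ℝ} {α : V →L[ℝ] ℝ} {B : V →L[ℝ] V →L[ℝ] ℝ}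

lemma QuadNorm.smul (q : QuadNorm φ α B) {σ : ℝ} (hσ : σ ^ 2 = 1) : QuadNorm φ (σ • α) B where
  ne := smul_ne_zero (by rintro rfl; norm_num at hσ) q.ne
  symm := q.symm
  eq y hy := by
    obtain ⟨X, h1, h2⟩ := q.eq y hy
    refine ⟨σ • X, by rw [map_smul, h1], ?_⟩
    rw [← h2]
    simp only [map_smul, smul_apply, smul_eq_mul]
    linear_combination φ y * α X * hσ

variable (h : MinkEnergy φ) (q : QuadNorm φ α B)
include h q

lemma QuadNorm.sq_le (y : V) : α y ^ 2 ≤ B y y := by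
  by_cases hy : y = 0
  · simp [hy]
  obtain ⟨X, h1, h2⟩ := q.eq y hy
  have hφ := h.energy_pos hy
  have hnn : ∀ v, 0 ≤ fderiv ℝ (fderiv ℝ φ) y v v := fun v => by
    by_cases hv : v = 0
    · simp [hv]
    · exact (h.pos y hy v hv).le
  have := hnn (X - (α y / (2 * φ y)) • y)
  have e1 : fderiv ℝ (fderiv ℝ φ) y y y = 2 * φ y := by rw [h.hess_self hy, h.fderiv_self hy]
  have e2 : fderiv ℝ (fderiv ℝ φ) y y X = α y := by rw [h.symm hy, h1]
  have key : 0 ≤ α X - α y ^ 2 / (2 * φ y) := by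
    convert this using 1
    simp only [map_sub, map_smul, sub_apply,
      smul_apply, smul_eq_mul, h1, e1, e2]
    field_simp
    ring
  rw [sub_nonneg, div_le_iff₀ (by positivity)] at key
  linarith

lemma QuadNorm.B_pos {y : V} (hy : y ≠ 0) : 0 < B y y := by
  obtain ⟨X, h1, h2⟩ := q.eq y hy
  have hX : X ≠ 0 := by rintro rfl; exact q.ne (by rw [← h1, map_zero])
  have h3 := h.pos y hy X hX
  rw [h1] at h3
  nlinarith [mul_pos (h.energy_pos hy) h3]

lemma QuadNorm.cauchy (v w : V) : B v w ^ 2 ≤ B v v * B w w := by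
  by_cases hv : v = 0
  · simp [hv]
  have h1 := q.B_pos h hv
  have h2 : 0 ≤ B (w - (B v w / B v v) • v) (w - (B v w / B v v) • v) := by
    by_cases h0 : w - (B v w / B v v) • v = 0
    · simp [h0]
    · exact (q.B_pos h h0).le
  have key : 0 ≤ B w w - B v w ^ 2 / B v v := by
    convert h2 using 1
    simp only [map_sub, map_smul, sub_apply,
      smul_apply, smul_eq_mul, q.symm w v]
    field_simp
    ring
  rw [sub_nonneg, div_le_iff₀ h1] at key
  linarith

variable [FiniteDimensional ℝ V]

lemma pole_apply : α (h.leg α) = 2 * φ (h.leg α) := by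
  rw [← h.fderiv_self (h.leg_ne q.ne), h.fderiv_leg q.ne]

/-- At the pole `y₀`, where `dφ = α`, the inequality `α(y)² ≤ B(y, y)` is an equality, so its
first variation vanishes. -/
lemma B_pole (z : V) : B (h.leg α) z = 2 * φ (h.leg α) * α z := by
  have hy := h.leg_ne q.ne
  set y0 := h.leg α with hy0
  have ha : α y0 = 2 * φ y0 := pole_apply h q
  obtain ⟨X, h1, h2⟩ := q.eq y0 hy
  have hX : X = y0 := h.hess_injective hy (by rw [h1, h.hess_self hy, h.fderiv_leg q.ne])
  rw [hX, ha] at h2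
  have hquad : ∀ t : ℝ, 0 ≤ (B z z - α z ^ 2) * (t * t)
      + (2 * (B y0 z - 2 * φ y0 * α z)) * t + 0 := by
    intro t
    have := q.sq_le h (y0 + t • z)
    simp only [map_add, map_smul, add_apply,
      smul_apply, smul_eq_mul, q.symm z y0, ha] at this
    nlinarith
  have := discrim_le_zero hquad
  rw [discrim] at this
  have h0 : 2 * (B y0 z - 2 * φ y0 * α z) = 0 := by
    have : (2 * (B y0 z - 2 * φ y0 * α z)) ^ 2 ≤ 0 := by linarith
    exact pow_eq_zero_iff two_ne_zero |>.1 (le_antisymm this (sq_nonneg _))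
  linarith

omit q in
lemma leg_circ_hasDerivAt {ζ : V →L[ℝ] ℝ} (hc : ∀ θ, circ α ζ θ ≠ 0) (θ : ℝ) :
    HasDerivAt (fun t => h.leg (circ α ζ t)) (deriv (fun t => h.leg (circ α ζ t)) θ) θ :=
  (((h.smooth_leg (hc θ)).comp θ (circ_contDiff α ζ).contDiffAt).differentiableAt
    (by simp)).hasDerivAt

omit q in
lemma hess_leg_circ {ζ : V →L[ℝ] ℝ} (hc : ∀ θ, circ α ζ θ ≠ 0) (θ : ℝ) :
    fderiv ℝ (fderiv ℝ φ) (h.leg (circ α ζ θ)) (deriv (fun t => h.leg (circ α ζ t)) θ)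
      = circ ζ (-α) θ := by
  have h1 := (h.hasFDerivAt_fderiv (h.leg_ne (hc θ))).comp_hasDerivAt θ
    (leg_circ_hasDerivAt h hc θ)
  refine h1.unique ((circ_hasDerivAt α ζ θ).congr_of_eventuallyEq ?_)
  exact Eventually.of_forall fun t => h.fderiv_leg (hc t)

omit q in
lemma energy_circ_contDiff {ζ : V →L[ℝ] ℝ} (hc : ∀ θ, circ α ζ θ ≠ 0) :
    ContDiff ℝ ∞ (fun θ => φ (h.leg (circ α ζ θ))) :=
  contDiff_iff_contDiffAt.2 fun θ => (h.smooth _ (h.leg_ne (hc θ))).comp θ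
    ((h.smooth_leg (hc θ)).comp θ (circ_contDiff α ζ).contDiffAt)

omit q in
lemma deriv_energy_circ {ζ : V →L[ℝ] ℝ} (hc : ∀ θ, circ α ζ θ ≠ 0) (θ : ℝ) :
    deriv (fun θ => φ (h.leg (circ α ζ θ))) θ = circ ζ (-α) θ (h.leg (circ α ζ θ)) := by
  have h1 : HasDerivAt (fun θ => φ (h.leg (circ α ζ θ))) _ θ :=
    (h.hasFDerivAt (h.leg_ne (hc θ))).comp_hasDerivAt θ (leg_circ_hasDerivAt h hc θ)
  rw [h1.deriv, ← hess_leg_circ h hc θ, h.symm (h.leg_ne (hc θ)), h.hess_self (h.leg_ne (hc θ))]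

omit q in
lemma deriv2_energy_circ {ζ : V →L[ℝ] ℝ} (hc : ∀ θ, circ α ζ θ ≠ 0) (θ : ℝ) :
    deriv (deriv (fun θ => φ (h.leg (circ α ζ θ)))) θ = -(2 * φ (h.leg (circ α ζ θ))) +
      circ ζ (-α) θ (deriv (fun t => h.leg (circ α ζ t)) θ) := by
  have h1 : HasDerivAt (deriv (fun θ => φ (h.leg (circ α ζ θ)))) _ θ :=
    ((circ_hasDerivAt ζ (-α) θ).clm_apply (leg_circ_hasDerivAt h hc θ)).congr_of_eventuallyEq
      (Eventually.of_forall fun t => deriv_energy_circ h hc t)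
  rw [h1.deriv, ← h.fderiv_self (h.leg_ne (hc θ)), h.fderiv_leg (hc θ)]
  congr 1
  simp only [circ, add_apply, smul_apply,
    neg_apply, smul_eq_mul]
  ring

omit q in
/-- The value of `α` on the curve in terms of the energy `e`: `α(y) = 2 e cos θ - e' sin θ`. -/
lemma alpha_leg_circ {ζ : V →L[ℝ] ℝ} (hc : ∀ θ, circ α ζ θ ≠ 0) (θ : ℝ) :
    α (h.leg (circ α ζ θ)) = 2 * φ (h.leg (circ α ζ θ)) * Real.cos θ
      - Real.sin θ * deriv (fun θ => φ (h.leg (circ α ζ θ))) θ := by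
  rw [deriv_energy_circ h hc, ← h.fderiv_self (h.leg_ne (hc θ)), h.fderiv_leg (hc θ)]
  simp only [circ, add_apply, smul_apply,
    neg_apply, smul_eq_mul]
  linear_combination -α (h.leg (Real.cos θ • α + Real.sin θ • ζ)) * Real.sin_sq_add_cos_sq θ

omit q in
lemma zeta_leg_circ {ζ : V →L[ℝ] ℝ} (hc : ∀ θ, circ α ζ θ ≠ 0) (θ : ℝ) :
    ζ (h.leg (circ α ζ θ)) = 2 * φ (h.leg (circ α ζ θ)) * Real.sin θ
      + Real.cos θ * deriv (fun θ => φ (h.leg (circ α ζ θ))) θ := by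
  rw [deriv_energy_circ h hc, ← h.fderiv_self (h.leg_ne (hc θ)), h.fderiv_leg (hc θ)]
  simp only [circ, add_apply, smul_apply,
    neg_apply, smul_eq_mul]
  linear_combination -ζ (h.leg (Real.cos θ • α + Real.sin θ • ζ)) * Real.sin_sq_add_cos_sq θ

/-- The equation along the curve: since `α = cos θ · ξ - sin θ · ξ'` for `ξ = circ α ζ`, the
gradient is `X = cos θ · y - sin θ · y'`, whence `α(X) = 2 e - 2 e' sin θ cos θ + e'' sin² θ`. -/
lemma circ_equation {ζ : V →L[ℝ] ℝ} (hc : ∀ θ, circ α ζ θ ≠ 0) (θ : ℝ) :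
    φ (h.leg (circ α ζ θ)) * (2 * φ (h.leg (circ α ζ θ))
      - 2 * Real.sin θ * Real.cos θ * deriv (fun θ => φ (h.leg (circ α ζ θ))) θ
      + Real.sin θ ^ 2 * deriv (deriv (fun θ => φ (h.leg (circ α ζ θ)))) θ)
      = 1 / 2 * B (h.leg (circ α ζ θ)) (h.leg (circ α ζ θ)) := by
  have hy := h.leg_ne (hc θ)
  obtain ⟨X, h1, h2⟩ := q.eq _ hy
  rw [← h2]
  congr 1
  have hs := Real.sin_sq_add_cos_sq θ
  have hX : X = Real.cos θ • h.leg (circ α ζ θ)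
      - Real.sin θ • deriv (fun t => h.leg (circ α ζ t)) θ := by
    apply h.hess_injective hy
    rw [h1, map_sub, map_smul, map_smul, h.hess_self hy, h.fderiv_leg (hc θ),
      hess_leg_circ h hc θ]
    ext v
    simp only [circ, add_apply, smul_apply,
      sub_apply, neg_apply, smul_eq_mul]
    linear_combination -α v * hs
  have hαy' : α (deriv (fun t => h.leg (circ α ζ t)) θ)
      = Real.cos θ * deriv (fun θ => φ (h.leg (circ α ζ θ))) θ
        - Real.sin θ * (2 * φ (h.leg (circ α ζ θ))
          + deriv (deriv (fun θ => φ (h.leg (circ α ζ θ)))) θ) := by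
    have e1 : circ α ζ θ (deriv (fun t => h.leg (circ α ζ t)) θ)
        = deriv (fun θ => φ (h.leg (circ α ζ θ))) θ := by
      rw [deriv_energy_circ h hc, ← hess_leg_circ h hc θ, h.symm hy, h.hess_self hy,
        h.fderiv_leg (hc θ)]
    rw [← e1, deriv2_energy_circ h hc]
    simp only [circ, add_apply, smul_apply,
      neg_apply, smul_eq_mul]
    linear_combination
      -α (deriv (fun t => h.leg (Real.cos t • α + Real.sin t • ζ)) θ) * hs
  rw [hX, map_sub, map_smul, map_smul, hαy', alpha_leg_circ h hc, smul_eq_mul, smul_eq_mul]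
  linear_combination (-(2 * φ (h.leg (circ α ζ θ)))) * hs

/-- On the kernel of `α` the Hessian at the pole `y₀` is `B / (2 φ(y₀))`. The equation along the
curve with `ζ = g(y₀) z` reads `sin² θ · (e e'' + 2 e² - e'²/2) = ½ B(Py, Py)`, with `P` the
`B`-orthogonal projection along `y₀`; divide by `sin² θ` and let `θ → 0`. -/
lemma pole_hess {z : V} (hz : α z = 0) :
    2 * φ (h.leg α) * fderiv ℝ (fderiv ℝ φ) (h.leg α) z z = B z z := by
  by_cases hz0 : z = 0
  · simp [hz0]
  have hy := h.leg_ne q.ne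
  have ha := pole_apply h q
  have hB0 := B_pole h q
  have hφ := h.energy_pos hy
  have hleg := h.fderiv_leg q.ne
  set y0 := h.leg α with hy0
  set ζ := fderiv ℝ (fderiv ℝ φ) y0 z with hζ
  have hζy0 : ζ y0 = 0 := by
    rw [hζ, h.symm hy, h.hess_self hy, hleg, hz]
  have hζz : 0 < ζ z := h.pos y0 hy z hz0
  have hc : ∀ θ, circ α ζ θ ≠ 0 := by
    intro θ h0
    have h1 := DFunLike.congr_fun h0 y0
    have h2 := DFunLike.congr_fun h0 z
    simp only [circ, add_apply, smul_apply, smul_eq_mul,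
      hζy0, hz, ha, zero_apply, mul_zero, add_zero, zero_add] at h1 h2
    have h3 := Real.sin_sq_add_cos_sq θ
    rcases mul_eq_zero.1 h1 with h1 | h1
    · rcases mul_eq_zero.1 h2 with h2 | h2
      · rw [h1, h2] at h3; norm_num at h3
      · exact hζz.ne' h2
    · linarith
  have hc0 : circ α ζ 0 = α := by simp [circ]
  have hc0' : circ ζ (-α) 0 = ζ := by simp [circ]
  have heq := circ_equation h q hc
  have hal := alpha_leg_circ h hc
  have hd1 := deriv_energy_circ h hc 0
  have hd2 := deriv2_energy_circ h hc 0
  have hes := energy_circ_contDiff h hc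
  have hyd := leg_circ_hasDerivAt h hc 0
  have hy'z : deriv (fun t => h.leg (circ α ζ t)) 0 = z := by
    apply h.hess_injective hy
    have := hess_leg_circ h hc 0
    rwa [hc0, hc0', ← hy0] at this
  rw [hy'z] at hyd hd2
  rw [hc0, hc0', ← hy0] at hd1 hd2
  rw [hζy0] at hd1
  set e : ℝ → ℝ := fun θ => φ (h.leg (circ α ζ θ)) with he
  set y : ℝ → V := fun θ => h.leg (circ α ζ θ) with hyy
  have he0 : e 0 = φ y0 := by simp only [he, hc0]; rfl
  have hyz : y 0 = y0 := by simp only [hyy, hc0]; rfl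
  set R : ℝ → V := fun θ => y θ - (α (y θ) / (2 * φ y0)) • y0 with hR
  have hRd : HasDerivAt R z 0 := by
    have := hyd.sub (((α.hasFDerivAt.comp_hasDerivAt 0 hyd).div_const (2 * φ y0)).smul_const y0)
    rw [hz] at this
    simp only [zero_div, zero_smul, sub_zero] at this
    exact this
  have hR0 : R 0 = 0 := by
    simp only [hR, hyz, ha]
    rw [div_self (by positivity), one_smul, sub_self]
  have hRB : ∀ θ, B (R θ) (R θ) = B (y θ) (y θ) - α (y θ) ^ 2 := by
    intro θ
    simp only [hR, map_sub, map_smul, sub_apply,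
      smul_apply, smul_eq_mul, q.symm (y θ) y0, hB0, ha]
    field_simp
    ring
  have hes1 : ContDiff ℝ ∞ (deriv e) := (contDiff_infty_iff_deriv.1 hes).2
  have hes2 : ContDiff ℝ ∞ (deriv (deriv e)) := (contDiff_infty_iff_deriv.1 hes1).2
  have hsin0 : ∀ᶠ x in 𝓝[≠] (0 : ℝ), Real.sin x ≠ 0 := by
    simpa using (Real.hasDerivAt_sin 0).eventually_ne (c := 0) (by simp)
  have hT1 : Tendsto (fun θ => (Real.sin θ)⁻¹ • R θ) (𝓝[≠] 0) (𝓝 z) := by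
    have a := hasDerivAt_iff_tendsto_slope.1 hRd
    have b := hasDerivAt_iff_tendsto_slope.1 (Real.hasDerivAt_sin 0)
    rw [Real.cos_zero] at b
    have := (b.inv₀ one_ne_zero).smul a
    rw [inv_one, one_smul] at this
    refine this.congr' ?_
    filter_upwards [self_mem_nhdsWithin] with x hx
    have hx' : x ≠ 0 := hx
    simp only [slope, hR0, vsub_eq_sub, sub_zero, Real.sin_zero, smul_eq_mul, smul_smul]
    congr 1
    field_simp
  have hBc : Continuous fun v => B v v := by fun_prop
  have hT2 := (hBc.tendsto z).comp hT1
  have hT3 : Tendsto (fun θ => 2 * (e θ * deriv (deriv e) θ + 2 * e θ ^ 2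
      - 1 / 2 * deriv e θ ^ 2)) (𝓝[≠] 0) (𝓝 (B z z)) := by
    refine hT2.congr' ?_
    filter_upwards [hsin0] with θ hθ
    have h1 : e θ * (2 * e θ - 2 * Real.sin θ * Real.cos θ * deriv e θ
      + Real.sin θ ^ 2 * deriv (deriv e) θ) = 1 / 2 * B (y θ) (y θ) := heq θ
    have h2 : α (y θ) = 2 * e θ * Real.cos θ - Real.sin θ * deriv e θ := hal θ
    have h3 := hRB θ
    have h4 := Real.sin_sq_add_cos_sq θ
    simp only [Function.comp, map_smul, smul_apply, smul_eq_mul, h3, h2]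
    field_simp
    linear_combination (-2) * h1 - 4 * e θ ^ 2 * h4
  have hT4 : Tendsto (fun θ => 2 * (e θ * deriv (deriv e) θ + 2 * e θ ^ 2
      - 1 / 2 * deriv e θ ^ 2)) (𝓝[≠] 0) (𝓝 (2 * (e 0 * deriv (deriv e) 0 + 2 * e 0 ^ 2
      - 1 / 2 * deriv e 0 ^ 2))) := by
    have c0 := hes.continuous
    have c1 := hes1.continuous
    have c2 := hes2.continuous
    have : Continuous (fun θ => 2 * (e θ * deriv (deriv e) θ + 2 * e θ ^ 2
      - 1 / 2 * deriv e θ ^ 2)) := by fun_prop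
    exact (this.tendsto 0).mono_left nhdsWithin_le_nhds
  have := tendsto_nhds_unique hT3 hT4
  rw [he0, hd1, hd2] at this
  rw [this]
  ring

/-- Along the circle through `α` and a `B`-unit covector `ζ = B v` orthogonal to it, the energy
is flat to second order at `θ = 0`. -/
lemma deriv2_pole {v : V} (hv : α v = 0) (hv1 : B v v = 1) (hc : ∀ θ, circ α (B v) θ ≠ 0) :
    deriv (deriv (fun θ => φ (h.leg (circ α (B v) θ)))) 0 = 0 := by
  have hy := h.leg_ne q.ne
  have ha := pole_apply h q
  have hleg := h.fderiv_leg q.ne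
  have hφ := h.energy_pos hy
  have hc0 : circ α (B v) 0 = α := by simp [circ]
  have hc0' : circ (B v) (-α) 0 = B v := by simp [circ]
  have hpol : ∀ z, α z = 0 → 2 * φ (h.leg α) * fderiv ℝ (fderiv ℝ φ) (h.leg α) v z = B v z := by
    intro z hz
    have h1 := pole_hess h q (z := v + z) (by rw [map_add, hv, hz, add_zero])
    have h2 := pole_hess h q hv
    have h3 := pole_hess h q hz
    simp only [map_add, add_apply, q.symm z v, h.symm hy z v] at h1
    linarith
  have hy' : deriv (fun t => h.leg (circ α (B v) t)) 0 = (2 * φ (h.leg α)) • v := by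
    have h1 := hess_leg_circ h hc 0
    rw [hc0, hc0'] at h1
    apply h.hess_injective hy
    rw [h1, map_smul]
    ext w
    set c := α w / (2 * φ (h.leg α)) with hcdef
    have hw : α (w - c • h.leg α) = 0 := by
      rw [map_sub, map_smul, ha, hcdef, smul_eq_mul]; field_simp; ring
    have h2 := hpol _ hw
    have h3 : B v (h.leg α) = 0 := by rw [q.symm, B_pole h q, hv, mul_zero]
    have h4 : fderiv ℝ (fderiv ℝ φ) (h.leg α) v (h.leg α) = 0 := by
      rw [h.symm hy, h.hess_self hy, hleg, hv]
    simp only [map_sub, map_smul, h3, h4, smul_zero, sub_zero] at h2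
    rw [← h2, smul_apply, smul_eq_mul]
  rw [deriv2_energy_circ h hc, hy', hc0, hc0', map_smul, hv1, smul_eq_mul]
  ring

/-- The energy is constant along the Legendre image of every `B`-unit circle through `α`. -/
lemma deriv_energy_eq_zero {v : V} (hv : α v = 0) (hv1 : B v v = 1)
    (hc : ∀ θ, circ α (B v) θ ≠ 0) (θ : ℝ) :
    deriv (fun θ => φ (h.leg (circ α (B v) θ))) θ = 0 := by
  refine deriv_eq_zero_of_periodic (energy_circ_contDiff h hc)
    (fun θ => h.energy_pos (h.leg_ne (hc θ))) (fun θ => by simp [circ]) ?_ ?_ θ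
  · intro θ
    have h1 := circ_equation h q hc θ
    have h2 := alpha_leg_circ h hc θ
    have h3 := zeta_leg_circ h hc θ
    have h4 := Real.sin_sq_add_cos_sq θ
    have hB0 := B_pole h q
    have ha := pole_apply h q
    have hφ := h.energy_pos (h.leg_ne q.ne)
    set e : ℝ → ℝ := fun θ => φ (h.leg (circ α (B v) θ)) with he
    set y := h.leg (circ α (B v) θ) with hy
    change e θ * (2 * e θ - _ + _) = _ at h1
    change _ = 2 * e θ * _ - _ at h2
    change _ = 2 * e θ * _ + _ at h3
    -- Bessel's inequality for the `B`-orthonormal pair `y₀ / (2 φ(y₀))`, `v`.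
    have hbes : α y ^ 2 + B v y ^ 2 ≤ B y y := by
      have := q.cauchy h v (y - (α y / (2 * φ (h.leg α))) • h.leg α)
      have hvy0 : B v (h.leg α) = 0 := by rw [q.symm, hB0, hv, mul_zero]
      simp only [map_sub, map_smul, sub_apply,
        smul_apply, smul_eq_mul, hv1, q.symm y (h.leg α), hB0, ha, hvy0] at this
      have e1 : α y / (2 * φ (h.leg α)) * (2 * φ (h.leg α) * α y) = α y ^ 2 := by
        field_simp
      have e2 : α y / (2 * φ (h.leg α)) * (2 * φ (h.leg α) * (2 * φ (h.leg α)))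
          = 2 * φ (h.leg α) * α y := by field_simp
      rw [e1, e2] at this
      linarith
    rw [h2, h3] at hbes
    have e3 : (2 * e θ * Real.cos θ - Real.sin θ * deriv e θ) ^ 2
        + (2 * e θ * Real.sin θ + Real.cos θ * deriv e θ) ^ 2
        = 4 * e θ ^ 2 + deriv e θ ^ 2 := by
      linear_combination (4 * e θ ^ 2 + deriv e θ ^ 2) * h4
    rw [e3] at hbes
    linarith
  · -- A zero of `sin` is a pole `± α` of the circle; shift the parameter to place it at `0`.
    intro θ hθ
    have hσ : Real.cos θ ^ 2 = 1 := by
      have := Real.sin_sq_add_cos_sq θ; rw [hθ] at this; linarith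
    have hshift : ∀ t, circ (Real.cos θ • α) (B (Real.cos θ • v)) t = circ α (B v) (t + θ) := by
      intro t
      simp only [circ, Real.cos_add, Real.sin_add, hθ, map_smul]
      module
    have h1 := deriv2_pole h (q.smul hσ) (v := Real.cos θ • v) (by simp [hv])
      (by simp only [map_smul, smul_apply, smul_eq_mul, hv1]; linarith)
      (fun t => by rw [hshift]; exact hc _)
    simp only [hshift] at h1
    have h2 : deriv (fun t => φ (h.leg (circ α (B v) (t + θ))))
        = fun t => deriv (fun s => φ (h.leg (circ α (B v) s))) (t + θ) := by
      funext t
      exact deriv_comp_add_const (fun s => φ (h.leg (circ α (B v) s))) θ t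
    rw [h2, deriv_comp_add_const, zero_add] at h1
    exact h1

/-- Rigidity: if `E · g^{lm} α_l α_m` is a quadratic form, then so is `E` itself. -/
theorem QuadNorm.rigid (hdim : 2 ≤ Module.finrank ℝ V) {y : V} (hy : y ≠ 0) :
    φ y * (2 * φ (h.leg α)) = 1 / 2 * B y y := by
  have hy0 := h.leg_ne q.ne
  have ha := pole_apply h q
  have hφ := h.energy_pos hy0
  have hB0 := B_pole h q
  have hfr : Module.finrank ℝ V = Module.finrank ℝ (V →L[ℝ] ℝ) := by
    rw [← (LinearMap.toContinuousLinearMap (𝕜 := ℝ) (E := V) (F' := ℝ)).finrank_eq]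
    exact (Subspace.dual_finrank_eq (K := ℝ) (V := V)).symm
  have hBinj : Function.Injective (B : V →ₗ[ℝ] (V →L[ℝ] ℝ)) := by
    rw [← LinearMap.ker_eq_bot, LinearMap.ker_eq_bot']
    intro m hm
    by_contra hne
    have := q.B_pos h hne
    have hm' : B m = 0 := hm
    rw [hm'] at this
    simp at this
  obtain ⟨w, hw⟩ : ∃ w, B w = fderiv ℝ φ y :=
    (LinearMap.linearEquivOfInjective _ hBinj hfr).surjective (fderiv ℝ φ y)
  -- Every covector is `c α + r B v` for some `B`-unit `v` in the kernel of `α`.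
  obtain ⟨v, r, hv, hv1, hwv⟩ : ∃ (v : V) (r : ℝ), α v = 0 ∧ B v v = 1 ∧
      B w = α w • α + r • B v := by
    have hunit : ∀ z : V, z ≠ 0 → B ((√(B z z))⁻¹ • z) ((√(B z z))⁻¹ • z) = 1 := by
      intro z hz
      have h1 := q.B_pos h hz
      have h2 := Real.sq_sqrt h1.le
      have h3 := Real.sqrt_pos.2 h1
      simp only [map_smul, smul_apply, smul_eq_mul]
      field_simp
      linarith
    set u := w - (α w / (2 * φ (h.leg α))) • h.leg α with hu
    have hBu : B w = α w • α + B u := by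
      have : B (h.leg α) = (2 * φ (h.leg α)) • α := by ext z; simp [hB0]
      rw [hu, map_sub, map_smul, this, smul_smul, div_mul_cancel₀ _ (by positivity)]
      abel
    have hαu : α u = 0 := by
      rw [hu, map_sub, map_smul, ha, smul_eq_mul, div_mul_cancel₀ _ (by positivity), sub_self]
    by_cases hu0 : u = 0
    · obtain ⟨z, hz, hz0⟩ : ∃ z ∈ (α : V →ₗ[ℝ] ℝ).ker, z ≠ 0 :=
        (Submodule.ne_bot_iff _).1
          (LinearMap.ker_ne_bot_of_finrank_lt (by rw [Module.finrank_self]; omega))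
      have hz' : α z = 0 := hz
      refine ⟨(√(B z z))⁻¹ • z, 0, by simp [hz'], hunit z hz0, ?_⟩
      rw [hBu, hu0]; simp
    · refine ⟨(√(B u u))⁻¹ • u, √(B u u), by simp [hαu], hunit u hu0, ?_⟩
      have h3 := Real.sqrt_pos.2 (q.B_pos h hu0)
      rw [hBu, map_smul, smul_smul, mul_inv_cancel₀ h3.ne', one_smul]
  have hc : ∀ θ, circ α (B v) θ ≠ 0 := by
    intro θ h0
    have h1 := DFunLike.congr_fun h0 (h.leg α)
    have h2 := DFunLike.congr_fun h0 v
    have hvy0 : B v (h.leg α) = 0 := by rw [q.symm, hB0, hv, mul_zero]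
    simp only [circ, add_apply, smul_apply, smul_eq_mul,
      hvy0, hv, hv1, ha, zero_apply, mul_zero, add_zero, zero_add,
      mul_one] at h1 h2
    have h3 := Real.sin_sq_add_cos_sq θ
    rcases mul_eq_zero.1 h1 with h1 | h1
    · rw [h1, h2] at h3; norm_num at h3
    · linarith
  have hder := deriv_energy_eq_zero h q hv hv1 hc
  have hconst : ∀ θ, φ (h.leg (circ α (B v) θ)) = φ (h.leg α) := by
    intro θ
    have := is_const_of_deriv_eq_zero
      ((energy_circ_contDiff h hc).differentiable (by simp)) hder θ 0
    simpa [circ] using this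
  have hder2 : ∀ θ, deriv (deriv (fun θ => φ (h.leg (circ α (B v) θ)))) θ = 0 := by
    intro θ
    rw [funext hder]; simp
  have hcirc : ∀ θ, φ (h.leg (circ α (B v) θ)) * (2 * φ (h.leg α))
      = 1 / 2 * B (h.leg (circ α (B v) θ)) (h.leg (circ α (B v) θ)) := by
    intro θ
    rw [← circ_equation h q hc, hder, hder2, hconst]
    ring
  -- Polar coordinates of `dφ y` in the plane spanned by `α` and `B v`.
  set Z : ℂ := ⟨α w, r⟩ with hZ
  set θ := Complex.arg Z with hθ
  have hpolar : fderiv ℝ φ y = ‖Z‖ • circ α (B v) θ := by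
    rw [← hw, hwv, circ, smul_add, smul_smul, smul_smul, hθ, Complex.norm_mul_cos_arg,
      Complex.norm_mul_sin_arg]
  have hZ0 : 0 < ‖Z‖ := by
    rw [norm_pos_iff]
    intro h0
    rw [h0, norm_zero, zero_smul] at hpolar
    exact h.fderiv_ne_zero hy hpolar
  have hyleg : y = ‖Z‖ • h.leg (circ α (B v) θ) := by
    have hl := h.leg_ne (hc θ)
    apply h.fderiv_injective hy (smul_ne_zero hZ0.ne' hl)
    rw [hpolar, h.fderiv_smul hl hZ0, h.fderiv_leg (hc θ)]
  rw [hyleg, h.homog _ (h.leg_ne (hc θ)) _ hZ0]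
  simp only [map_smul, smul_apply, smul_eq_mul]
  linear_combination ‖Z‖ ^ 2 * hcirc θ

/-- A fiber energy with `E · g^{lm} α_l α_m` quadratic has constant Hessian. -/
lemma QuadNorm.hess_eq (hdim : 2 ≤ Module.finrank ℝ V) {y : V} (hy : y ≠ 0) :
    fderiv ℝ (fderiv ℝ φ) y = (2 * φ (h.leg α))⁻¹ • B := by
  have ha : 0 < 2 * φ (h.leg α) := by have := h.energy_pos (h.leg_ne q.ne); positivity
  have h1 : ∀ z, z ≠ 0 → fderiv ℝ φ z = (2 * φ (h.leg α))⁻¹ • B z := by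
    intro z hz
    have hB : HasFDerivAt (fun w => (2 * φ (h.leg α))⁻¹ * (1 / 2 * B w w))
        ((2 * φ (h.leg α))⁻¹ • B z) z := by
      refine (((B.hasFDerivAt (x := z)).clm_apply
        (hasFDerivAt_id (𝕜 := ℝ) z)).const_mul (1 / 2) |>.const_mul _).congr_fderiv ?_
      ext v
      simp [q.symm v z]
      ring
    refine (hB.congr_of_eventuallyEq ?_).fderiv
    filter_upwards [isOpen_ne.mem_nhds hz] with w hw
    rw [← q.rigid h hdim hw, mul_comm (φ w), inv_mul_cancel_left₀ ha.ne']
  have h2 : fderiv ℝ φ =ᶠ[𝓝 y] fun z => (2 * φ (h.leg α))⁻¹ • B z := by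
    filter_upwards [isOpen_ne.mem_nhds hy] with z hz using h1 z hz
  rw [h2.fderiv_eq]
  exact ((2 * φ (h.leg α))⁻¹ • B).hasFDerivAt.fderiv

end Rigidity

end FinslerConformal

/-! ### The fiber of a Finsler energy and the conformal change of its spray -/

namespace FinslerConformal

open Filter Topology Set
open scoped ContDiff

section Bridge

variable {n : ℕ}

/-- Smoothness off the origin of a fiber. -/
def SmoothOff (f : Vec n → ℝ) : Prop := ∀ y, y ≠ 0 → ContDiffAt ℝ ∞ f y

namespace SmoothOff

variable {f g : Vec n → ℝ}

lemma fderiv_apply (hf : SmoothOff f) (v : Vec n) : SmoothOff fun y => fderiv ℝ f y v :=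
  fun y hy => ((hf y hy).fderiv_right (m := ∞) (by simp)).clm_apply contDiffAt_const

lemma congr (hf : SmoothOff f) (hfg : ∀ y, y ≠ 0 → g y = f y) : SmoothOff g := fun y hy =>
  (hf y hy).congr_of_eventuallyEq (by
    filter_upwards [isOpen_ne.mem_nhds hy] with z hz using hfg z hz)

lemma sum {ι : Type*} {s : Finset ι} {F : ι → Vec n → ℝ} (hF : ∀ l, SmoothOff (F l)) :
    SmoothOff fun y => ∑ l ∈ s, F l y := fun y hy => ContDiffAt.sum fun l _ => hF l y hy

lemma prod {ι : Type*} {s : Finset ι} {F : ι → Vec n → ℝ} (hF : ∀ l, SmoothOff (F l)) :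
    SmoothOff fun y => ∏ l ∈ s, F l y := fun y hy => contDiffAt_prod fun l _ => hF l y hy

lemma mul (hf : SmoothOff f) (hg : SmoothOff g) : SmoothOff fun y => f y * g y :=
  fun y hy => (hf y hy).mul (hg y hy)

lemma sub (hf : SmoothOff f) (hg : SmoothOff g) : SmoothOff fun y => f y - g y :=
  fun y hy => (hf y hy).sub (hg y hy)

lemma const (c : ℝ) : SmoothOff fun _ : Vec n => c := fun _ _ => contDiffAt_const

lemma coord (k : Fin n) : SmoothOff fun y : Vec n => y k := fun _ _ => contDiffAt_apply ℝ ℝ k _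

lemma det {M : Vec n → Matrix (Fin n) (Fin n) ℝ} (hM : ∀ i j, SmoothOff fun y => M y i j) :
    SmoothOff fun y => (M y).det := by
  simp only [Matrix.det_apply']
  exact sum fun σ => (const _).mul (prod fun i => hM _ _)

lemma inv {M : Vec n → Matrix (Fin n) (Fin n) ℝ} (hM : ∀ i j, SmoothOff fun y => M y i j)
    (hdet : ∀ y, y ≠ 0 → (M y).det ≠ 0) (i j : Fin n) : SmoothOff fun y => (M y)⁻¹ i j := by
  simp only [Matrix.inv_def, Matrix.smul_apply, Ring.inverse_eq_inv', smul_eq_mul,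
    Matrix.adjugate_apply]
  refine mul (fun y hy => (det hM y hy).inv (hdet y hy)) (det fun a b => ?_)
  by_cases hab : a = j
  · subst hab; simpa using const _
  · simpa [Matrix.updateRow_ne hab] using hM a b

end SmoothOff

lemma fderiv_apply_congr {f g : Vec n → ℝ} (hfg : ∀ y, y ≠ 0 → f y = g y) (v : Vec n) {y : Vec n}
    (hy : y ≠ 0) : fderiv ℝ f y v = fderiv ℝ g y v := by
  have : f =ᶠ[𝓝 y] g := by
    filter_upwards [isOpen_ne.mem_nhds hy] with z hz using hfg z hz
  rw [this.fderiv_eq]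

lemma fderiv_apply_sum {F G : Fin n → Vec n → ℝ} (hF : ∀ l, SmoothOff (F l))
    (hG : ∀ l, SmoothOff (G l)) (c : Fin n → ℝ) (v : Vec n) {y : Vec n} (hy : y ≠ 0) :
    fderiv ℝ (fun y => ∑ l, (F l y - G l y) * c l) y v =
      ∑ l, (fderiv ℝ (F l) y v - fderiv ℝ (G l) y v) * c l := by
  have hd : ∀ {f : Vec n → ℝ}, SmoothOff f → HasFDerivAt f (fderiv ℝ f y) y :=
    fun hf => ((hf y hy).differentiableAt (by simp)).hasFDerivAt
  have := HasFDerivAt.fun_sum (u := Finset.univ)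
    fun l (_ : l ∈ Finset.univ) => ((hd (hF l)).sub (hd (hG l))).mul_const (c l)
  have e : fderiv ℝ (fun y => ∑ l, (F l y - G l y) * c l) y = _ := this.fderiv
  rw [e]
  simp [mul_comm]

/-- Linear functionals on `ℝⁿ` agreeing on the standard basis agree. -/
lemma clm_ext {F : Type*} [NormedAddCommGroup F] [NormedSpace ℝ F] {A A' : Vec n →L[ℝ] F}
    (hA : ∀ i, A (Pi.single i 1) = A' (Pi.single i 1)) : A = A' := by
  ext v
  rw [pi_eq_sum_univ' (R := ℝ) v]
  simp only [map_sum, map_smul, hA]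

/-- A smooth function off the origin of `ℝⁿ`, `n ≥ 2`, all of whose third partial derivatives
vanish, has constant Hessian. -/
lemma hess_const_of_third_zero (hn : 2 ≤ n) {f : Vec n → ℝ} (hf : SmoothOff f)
    (h3 : ∀ y, y ≠ 0 → ∀ i j k : Fin n,
      fderiv ℝ (fun z => fderiv ℝ (fun w => fderiv ℝ f w (Pi.single i 1)) z (Pi.single j 1)) y
        (Pi.single k 1) = 0) {y z : Vec n} (hy : y ≠ 0) (hz : z ≠ 0) :
    fderiv ℝ (fderiv ℝ f) y = fderiv ℝ (fderiv ℝ f) z := by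
  have hconn : IsPreconnected ({0}ᶜ : Set (Vec n)) :=
    (isConnected_compl_singleton_of_one_lt_rank (by
      rw [rank_fin_fun]; exact_mod_cast hn) 0).isPreconnected
  have key : ∀ i j : Fin n, ∀ w : Vec n, w ≠ 0 →
      fderiv ℝ (fun w => fderiv ℝ f w (Pi.single i 1)) w (Pi.single j 1)
        = fderiv ℝ (fderiv ℝ f) w (Pi.single j 1) (Pi.single i 1) := by
    intro i j w hw
    have := (((hf w hw).fderiv_right (m := ∞) (by simp)).differentiableAt
      (by simp)).hasFDerivAt.clm_apply (hasFDerivAt_const (Pi.single i (1 : ℝ) : Vec n) w)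
    rw [this.fderiv]
    simp
  refine clm_ext fun j => clm_ext fun i => ?_
  rw [← key i j y hy, ← key i j z hz]
  refine isOpen_compl_singleton.is_const_of_fderiv_eq_zero hconn (𝕜 := ℝ)
    (f := fun z => fderiv ℝ (fun w => fderiv ℝ f w (Pi.single i 1)) z (Pi.single j 1))
    (fun w hw => ?_) (fun w hw => ?_) hy hz
  · exact ((((hf.fderiv_apply _).fderiv_apply _) w hw).differentiableAt
      (by simp)).differentiableWithinAt
  · exact clm_ext fun k => h3 w hw i j k

variable {U : Set (Vec n)} {E : Fn n} {α : Vec n → ℝ} {p : Vec n}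

lemma IsFinslerEnergy.contDiffAt (hE : IsFinslerEnergy U E) (hU : IsOpen U) (hp : p ∈ U)
    {y : Vec n} (hy : y ≠ 0) : ContDiffAt ℝ ∞ (fun q : Vec n × Vec n => E q.1 q.2) (p, y) :=
  hE.smooth.contDiffAt ((hU.prod isOpen_ne).mem_nhds ⟨hp, hy⟩)

lemma IsFinslerEnergy.twoHomog (hE : IsFinslerEnergy U E) (hU : IsOpen U) (hp : p ∈ U) :
    TwoHomog (E p) where
  smooth y hy := (hE.contDiffAt hU hp hy).comp y (contDiffAt_const.prodMk contDiffAt_id)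
  homog := hE.homog p hp

lemma gmat_apply (h : TwoHomog (E p)) {y : Vec n} (hy : y ≠ 0) (i j : Fin n) :
    gmat E p y i j = fderiv ℝ (fderiv ℝ (E p)) y (Pi.single i 1) (Pi.single j 1) := by
  have := (h.hasFDerivAt_fderiv hy).clm_apply
    (hasFDerivAt_const (Pi.single j (1 : ℝ) : Vec n) y)
  change fderiv ℝ (fun w => fderiv ℝ (E p) w (Pi.single j 1)) y (Pi.single i 1) = _
  rw [this.fderiv]
  simp

lemma clm_apply_eq_sum (A : Vec n →L[ℝ] ℝ) (v : Vec n) :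
    A v = ∑ i, A (Pi.single i 1) * v i := by
  conv_lhs => rw [pi_eq_sum_univ' (R := ℝ) v]
  simp [map_sum, mul_comm]

lemma hess_apply_single (h : TwoHomog (E p)) {y : Vec n} (hy : y ≠ 0) (v : Vec n) (i : Fin n) :
    fderiv ℝ (fderiv ℝ (E p)) y v (Pi.single i 1) = (gmat E p y).mulVec v i := by
  rw [h.symm hy, clm_apply_eq_sum]
  simp only [Matrix.mulVec, dotProduct, gmat_apply h hy]

lemma IsFinslerEnergy.minkEnergy (hE : IsFinslerEnergy U E) (hU : IsOpen U) (hp : p ∈ U) :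
    MinkEnergy (E p) where
  toTwoHomog := hE.twoHomog hU hp
  pos y hy v hv := by
    have := (hE.posdef p hp y hy).dotProduct_mulVec_pos hv
    rw [clm_apply_eq_sum]
    simp only [hess_apply_single (hE.twoHomog hU hp) hy]
    simpa [dotProduct, mul_comm] using this

lemma IsFinslerEnergy.det_ne (hE : IsFinslerEnergy U E) (hp : p ∈ U) {y : Vec n} (hy : y ≠ 0) :
    IsUnit (gmat E p y).det :=
  (Matrix.isUnit_iff_isUnit_det _).1 (hE.posdef p hp y hy).isUnit

lemma IsFinslerEnergy.smoothOff_gup (hE : IsFinslerEnergy U E) (hU : IsOpen U) (hp : p ∈ U)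
    (l m : Fin n) : SmoothOff (gup E l m p) :=
  SmoothOff.inv (M := gmat E p)
    (fun _ j => SmoothOff.fderiv_apply (f := fun w => fderiv ℝ (E p) w (Pi.single j 1))
      (SmoothOff.fderiv_apply (hE.twoHomog hU hp).smooth _) _)
    (fun _ hy => (hE.det_ne hp hy).ne_zero) l m

/-- The gradient `X^l` is the preimage of `dα` under the Hessian of the energy. -/
lemma hess_Xup (hE : IsFinslerEnergy U E) (hU : IsOpen U) (hp : p ∈ U) {y : Vec n} (hy : y ≠ 0) :
    fderiv ℝ (fderiv ℝ (E p)) y (fun l => Xup E α l p y) = fderiv ℝ α p := by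
  refine clm_ext fun i => ?_
  rw [hess_apply_single (hE.twoHomog hU hp) hy]
  change (gmat E p y).mulVec ((gmat E p y)⁻¹.mulVec fun m => pda α m p) i = pda α i p
  rw [Matrix.mulVec_mulVec, Matrix.mul_nonsing_inv _ (hE.det_ne hp hy), Matrix.one_mulVec]

lemma gup_pdy (hE : IsFinslerEnergy U E) (hU : IsOpen U) (hp : p ∈ U) {y : Vec n} (hy : y ≠ 0)
    (l : Fin n) : ∑ m, gup E l m p y * pdy m E p y = y l := by
  have h := hE.twoHomog hU hp
  have : (fun m => pdy m E p y) = (gmat E p y).mulVec y := by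
    ext m
    rw [← hess_apply_single h hy, h.hess_self hy]
    rfl
  change ((gmat E p y)⁻¹.mulVec fun m => pdy m E p y) l = y l
  rw [this, Matrix.mulVec_mulVec, Matrix.nonsing_inv_mul _ (hE.det_ne hp hy), Matrix.one_mulVec]

lemma IsFinslerEnergy.smoothOff_pdx (hE : IsFinslerEnergy U E) (hU : IsOpen U) (hp : p ∈ U)
    (k : Fin n) : SmoothOff (pdx k E p) := by
  refine SmoothOff.congr (f := fun y => fderiv ℝ (fun q : Vec n × Vec n => E q.1 q.2) (p, y)
    (Pi.single k 1, 0)) (fun y hy => ?_) fun y hy => ?_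
  · have h1 := (hE.contDiffAt hU hp hy).fderiv_right (m := ∞) (by simp)
    exact (h1.comp y (contDiffAt_const.prodMk contDiffAt_id)).clm_apply contDiffAt_const
  · have h1 := ((hE.contDiffAt hU hp hy).differentiableAt (by simp)).hasFDerivAt
    have h2 := h1.comp p ((hasFDerivAt_id (𝕜 := ℝ) p).prodMk (hasFDerivAt_const y p))
    have e : fderiv ℝ (fun x' => E x' y) p = _ := h2.fderiv
    simp [pdx, e]

lemma IsFinslerEnergy.smoothOff_spray (hE : IsFinslerEnergy U E) (hU : IsOpen U) (hp : p ∈ U)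
    (l : Fin n) : SmoothOff (spray E l p) := by
  refine (SmoothOff.const (1 / 2)).mul (SmoothOff.sum fun m => (hE.smoothOff_gup hU hp l m).mul
    (SmoothOff.sub (SmoothOff.sum fun k => (SmoothOff.coord k).mul ?_) (hE.smoothOff_pdx hU hp m)))
  exact (hE.smoothOff_pdx hU hp k).fderiv_apply _

lemma gup_confE (hE : IsFinslerEnergy U E) (hU : IsOpen U) (hp : p ∈ U) {y : Vec n}
    (hy : y ≠ 0) (l m : Fin n) :
    gup (confE E α) l m p y = (Real.exp (2 * α p))⁻¹ * gup E l m p y := by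
  have e : gmat (confE E α) p y
      = (Units.mk0 (Real.exp (2 * α p)) (Real.exp_pos _).ne') • gmat E p y := by
    ext i j
    have h := hE.twoHomog hU hp
    have e1 : ∀ w, w ≠ 0 → pdy j (confE E α) p w = Real.exp (2 * α p) * pdy j E p w := by
      intro w hw
      have := ((h.hasFDerivAt hw).const_mul (Real.exp (2 * α p))).fderiv
      change fderiv ℝ (fun w => Real.exp (2 * α p) * E p w) w _ = _
      rw [this]
      rfl
    have := (((h.smooth_fderiv hy).differentiableAt (by simp)).clm_apply
      (differentiableAt_const (Pi.single j (1 : ℝ) : Vec n))).hasFDerivAt.const_mul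
        (Real.exp (2 * α p)) |>.fderiv
    change fderiv ℝ (pdy j (confE E α) p) y _ = _
    rw [fderiv_apply_congr e1 _ hy]
    change fderiv ℝ (fun w => Real.exp (2 * α p) * fderiv ℝ (E p) w (Pi.single j 1)) y _ = _
    rw [this]
    rfl
  rw [gup, e, Matrix.inv_smul' _ _ (hE.det_ne hp hy)]
  rfl

lemma pdx_confE (hE : IsFinslerEnergy U E) (hU : IsOpen U) (hp : p ∈ U)
    (hα : DifferentiableAt ℝ α p) {y : Vec n} (hy : y ≠ 0) (k : Fin n) :
    pdx k (confE E α) p y = Real.exp (2 * α p) * (2 * pda α k p * E p y + pdx k E p y) := by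
  have h0 : DifferentiableAt ℝ (fun q : Vec n × Vec n => E q.1 q.2) (p, y) :=
    (hE.contDiffAt hU hp hy).differentiableAt (by simp)
  have h1 : DifferentiableAt ℝ (fun x' => E x' y) p :=
    h0.comp p (f := fun x' => (x', y)) (differentiableAt_id.prodMk (differentiableAt_const y))
  have h2 := ((hα.hasFDerivAt.const_mul 2).exp).mul h1.hasFDerivAt
  have e : fderiv ℝ (fun x' => Real.exp (2 * α x') * E x' y) p = _ := h2.fderiv
  simp only [pdx, confE, e, pda, add_apply, smul_apply, smul_eq_mul]
  ring

lemma pdy_pdx_confE (hE : IsFinslerEnergy U E) (hU : IsOpen U) (hp : p ∈ U)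
    (hα : DifferentiableAt ℝ α p) {y : Vec n} (hy : y ≠ 0) (k m : Fin n) :
    pdy m (pdx k (confE E α)) p y
      = Real.exp (2 * α p) * (2 * pda α k p * pdy m E p y + pdy m (pdx k E) p y) := by
  have h1 := (((hE.twoHomog hU hp).hasFDerivAt hy).const_mul (2 * pda α k p)).add
    ((hE.smoothOff_pdx hU hp k y hy).differentiableAt (by simp)).hasFDerivAt
  have e : fderiv ℝ (fun y => Real.exp (2 * α p) * (2 * pda α k p * E p y + pdx k E p y)) y = _ :=
    (h1.const_mul (Real.exp (2 * α p))).fderiv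
  rw [pdy, fderiv_apply_congr (fun z hz => pdx_confE hE hU hp hα hz k) _ hy, e]
  simp only [add_apply, smul_apply, smul_eq_mul]
  rfl

/-- The conformal change of the geodesic spray: `G̃^l = G^l + (y^m α_m) y^l − E X^l`. -/
lemma spray_confE (hE : IsFinslerEnergy U E) (hU : IsOpen U) (hp : p ∈ U)
    (hα : DifferentiableAt ℝ α p) {y : Vec n} (hy : y ≠ 0) (l : Fin n) :
    spray (confE E α) l p y
      = spray E l p y + (yalpha α p y * y l - E p y * Xup E α l p y) := by
  have hx := (Real.exp_pos (2 * α p)).ne'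
  have hF : ∀ m, gup (confE E α) l m p y * ((∑ k, y k * pdy m (pdx k (confE E α)) p y)
      - pdx m (confE E α) p y)
      = gup E l m p y * ((∑ k, y k * pdy m (pdx k E) p y) - pdx m E p y)
        + 2 * yalpha α p y * (gup E l m p y * pdy m E p y)
        - 2 * E p y * (gup E l m p y * pda α m p) := by
    intro m
    have hs : ∑ k, y k * pdy m (pdx k (confE E α)) p y = Real.exp (2 * α p) *
        (2 * yalpha α p y * pdy m E p y + ∑ k, y k * pdy m (pdx k E) p y) := by
      simp only [pdy_pdx_confE hE hU hp hα hy, yalpha, Finset.mul_sum, Finset.sum_mul,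
        ← Finset.sum_add_distrib]
      exact Finset.sum_congr rfl fun k _ => by ring
    rw [hs, gup_confE hE hU hp hy, pdx_confE hE hU hp hα hy]
    field_simp
    ring
  simp only [spray, hF, Finset.sum_sub_distrib, Finset.sum_add_distrib, ← Finset.mul_sum,
    gup_pdy hE hU hp hy, Xup]
  ring

/-- The function `(y^m α_m)² − E X^l α_l` on a fiber. -/
def psi (E : Fn n) (α : Vec n → ℝ) (p y : Vec n) : ℝ :=
  yalpha α p y ^ 2 - E p y * Xalpha E α p y

lemma yalpha_eq (y : Vec n) : yalpha α p y = fderiv ℝ α p y := by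
  rw [clm_apply_eq_sum, yalpha]
  exact Finset.sum_congr rfl fun i _ => mul_comm _ _

lemma Xalpha_eq (y : Vec n) : Xalpha E α p y = fderiv ℝ α p fun l => Xup E α l p y := by
  rw [clm_apply_eq_sum, Xalpha]
  exact Finset.sum_congr rfl fun i _ => mul_comm _ _

lemma gmat_congr (h : TwoHomog (E p)) {y z : Vec n} (hy : y ≠ 0) (hz : z ≠ 0)
    (hyz : fderiv ℝ (fderiv ℝ (E p)) y = fderiv ℝ (fderiv ℝ (E p)) z) :
    gmat E p y = gmat E p z := by
  ext i j; rw [gmat_apply h hy, gmat_apply h hz, hyz]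

lemma Xup_congr {y z : Vec n} (hyz : gmat E p y = gmat E p z) (l : Fin n) :
    Xup E α l p y = Xup E α l p z := by
  simp only [Xup, gup, hyz]

lemma smoothOff_Xup (hE : IsFinslerEnergy U E) (hU : IsOpen U) (hp : p ∈ U) (l : Fin n) :
    SmoothOff (Xup E α l p) :=
  SmoothOff.sum fun m => (hE.smoothOff_gup hU hp l m).mul (SmoothOff.const _)

lemma psi_twoHomog (hE : IsFinslerEnergy U E) (hU : IsOpen U) (hp : p ∈ U) :
    TwoHomog (psi E α p) where
  smooth := by
    have h1 : SmoothOff (yalpha α p) :=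
      SmoothOff.sum fun m => (SmoothOff.coord m).mul (SmoothOff.const _)
    have h2 : SmoothOff (Xalpha E α p) :=
      SmoothOff.sum fun m => (smoothOff_Xup hE hU hp m).mul (SmoothOff.const _)
    intro y hy
    exact ((h1 y hy).pow 2).sub (((hE.twoHomog hU hp).smooth y hy).mul (h2 y hy))
  homog y hy t ht := by
    have h := hE.twoHomog hU hp
    have hX : Xalpha E α p (t • y) = Xalpha E α p y := by
      simp only [Xalpha, Xup_congr (gmat_congr h (smul_ne_zero ht.ne' hy) hy (h.hess_smul hy ht))]
    simp only [psi, yalpha_eq, hX, map_smul, h.homog y hy t ht, smul_eq_mul]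
    ring

/-- Contracted conformal invariance of the mixed Berwald curvature says that all third fiber
derivatives of `psi` vanish. -/
lemma psi_third_zero (hE : IsFinslerEnergy U E) (hU : IsOpen U) (hp : p ∈ U)
    (hα : DifferentiableAt ℝ α p)
    (hinv : ∀ y : Vec n, y ≠ 0 → ∀ i j k : Fin n,
      (∑ l, mixedCurv (confE E α) l i j k p y * pda α l p) =
        ∑ l, mixedCurv E l i j k p y * pda α l p)
    {y : Vec n} (hy : y ≠ 0) (i j k : Fin n) :
    fderiv ℝ (fun z => fderiv ℝ (fun w => fderiv ℝ (psi E α p) w (Pi.single i 1)) z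
      (Pi.single j 1)) y (Pi.single k 1) = 0 := by
  have hG := fun l => hE.smoothOff_spray hU hp l
  have hG' : ∀ l, SmoothOff (spray (confE E α) l p) := by
    intro l
    have h1 : SmoothOff (yalpha α p) :=
      SmoothOff.sum fun m => (SmoothOff.coord m).mul (SmoothOff.const _)
    refine SmoothOff.congr (fun y hy => ?_) fun y hy => spray_confE hE hU hp hα hy l
    exact (hG l y hy).add ((h1.mul (SmoothOff.coord l)).sub
      (SmoothOff.mul (hE.twoHomog hU hp).smooth (smoothOff_Xup hE hU hp l)) y hy)
  have e0 : ∀ y, y ≠ 0 → psi E α p y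
      = ∑ l, (spray (confE E α) l p y - spray E l p y) * pda α l p := by
    intro y hy
    simp only [spray_confE hE hU hp hα hy, add_sub_cancel_left, sub_mul, Finset.sum_sub_distrib,
      mul_assoc, ← Finset.mul_sum]
    simp only [psi, Xalpha, sq]
    rfl
  have e1 : ∀ y, y ≠ 0 → fderiv ℝ (psi E α p) y (Pi.single i 1)
      = ∑ l, (sprayD1 (confE E α) l i p y - sprayD1 E l i p y) * pda α l p := fun y hy => by
    rw [fderiv_apply_congr e0 _ hy, fderiv_apply_sum hG' hG _ _ hy]; rfl
  have hG1 := fun l => (hG l).fderiv_apply (Pi.single i 1)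
  have hG1' := fun l => (hG' l).fderiv_apply (Pi.single i 1)
  have e2 : ∀ y, y ≠ 0 →
      fderiv ℝ (fun w => fderiv ℝ (psi E α p) w (Pi.single i 1)) y (Pi.single j 1)
      = ∑ l, (sprayD2 (confE E α) l i j p y - sprayD2 E l i j p y) * pda α l p := fun y hy => by
    rw [fderiv_apply_congr e1 _ hy]; exact fderiv_apply_sum hG1' hG1 _ _ hy
  have hG2 := fun l => (hG1 l).fderiv_apply (Pi.single j 1)
  have hG2' := fun l => (hG1' l).fderiv_apply (Pi.single j 1)
  rw [fderiv_apply_congr e2 _ hy]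
  refine (fderiv_apply_sum hG2' hG2 (fun l => pda α l p) (Pi.single k 1) hy).trans ?_
  have := hinv y hy i j k
  simp only [mixedCurv, neg_mul, Finset.sum_neg_distrib, neg_inj] at this
  simp only [sub_mul, Finset.sum_sub_distrib]
  exact sub_eq_zero.2 this

/-- `E X^l α_l` is a quadratic form on the fiber, as `psi` is `2`-homogeneous with constant
Hessian. -/
lemma exists_quadNorm (hn : 2 ≤ n) (hE : IsFinslerEnergy U E) (hU : IsOpen U) (hp : p ∈ U)
    (hα : DifferentiableAt ℝ α p) (hdα : fderiv ℝ α p ≠ 0)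
    (hinv : ∀ y : Vec n, y ≠ 0 → ∀ i j k : Fin n,
      (∑ l, mixedCurv (confE E α) l i j k p y * pda α l p) =
        ∑ l, mixedCurv E l i j k p y * pda α l p) {y₁ : Vec n} (hy₁ : y₁ ≠ 0) :
    ∃ B, QuadNorm (E p) (fderiv ℝ α p) B := by
  have hψ : TwoHomog (psi E α p) := psi_twoHomog hE hU hp
  refine ⟨(2 : ℝ) • (fderiv ℝ α p).smulRight (fderiv ℝ α p)
    - fderiv ℝ (fderiv ℝ (psi E α p)) y₁, hdα, fun v w => ?_, fun y hy =>
    ⟨_, hess_Xup hE hU hp hy, ?_⟩⟩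
  · have := hψ.symm hy₁ v w
    simp [this, mul_comm]
  · have h1 := hess_const_of_third_zero hn hψ.smooth
      (fun y hy => psi_third_zero hE hU hp hα hinv hy) hy₁ hy
    have h2 : fderiv ℝ (fderiv ℝ (psi E α p)) y y y = 2 * psi E α p y := by
      rw [hψ.hess_self hy, hψ.fderiv_self hy]
    have h3 := Xalpha_eq (E := E) (α := α) (p := p) y
    have h4 := yalpha_eq (α := α) (p := p) y
    rw [h1]
    simp only [sub_apply, smul_apply, ContinuousLinearMap.smulRight_apply, smul_eq_mul, h2, psi,
      h4, ← h3]
    ring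

end Bridge

end FinslerConformal

/-! ### The Gram determinant -/

namespace FinslerConformal

/-- Theorem 1 of the paper. Under the contracted conformal invariance of
the mixed Berwald curvature and the positivity of the sectional curvature of the indicatrix
over `p` (expressed through the Gauss equation), the Gram determinant of the projected
vector field `η` and `W^l = X^sX^l_s` vanishes over `p`; that is, `η` and `W` are linearly
dependent at all nonzero `y` over `p`. -/
theorem gram_determinant_vanishes
    {n : ℕ} (hn : 3 ≤ n) (U : Set (Vec n)) (hU : IsOpen U)
    (E : Fn n) (hE : IsFinslerEnergy U E)
    (α : Vec n → ℝ) (hα : ContDiffOn ℝ (⊤ : ℕ∞) α U)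
    (p : Vec n) (hp : p ∈ U) (hdα : fderiv ℝ α p ≠ 0)
    (hinv : ∀ x ∈ U, ∀ y : Vec n, y ≠ 0 → ∀ i j k : Fin n,
      (∑ l, mixedCurv (confE E α) l i j k x y * pda α l x) =
        ∑ l, mixedCurv E l i j k x y * pda α l x)
    (hcurv : ∀ y : Vec n, y ≠ 0 → 2 * E p y = 1 → gramEtaW E α p y ≠ 0 →
      0 < 1 + Qcon E α p y / gramEtaW E α p y) :
    ∀ y : Vec n, y ≠ 0 →
      gramEtaW E α p y = 0 ∧
      ¬ LinearIndependent ℝ ![(fun l => etaUp E α l p y), (fun l => Wup E α l p y)] := by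
  intro y hy
  have hαp : DifferentiableAt ℝ α p :=
    (hα.contDiffAt (hU.mem_nhds hp)).differentiableAt (by simp)
  have hφ := hE.minkEnergy hU hp
  obtain ⟨B, q⟩ := exists_quadNorm (by omega) hE hU hp hαp hdα (hinv p hp) hy
  have hess : ∀ z : Vec n, z ≠ 0 →
      fderiv ℝ (fderiv ℝ (E p)) z = fderiv ℝ (fderiv ℝ (E p)) y :=
    fun z hz => (q.hess_eq hφ (by simp; omega) hz).trans (q.hess_eq hφ (by simp; omega) hy).symm
  have hXD : ∀ l s, XupD E α l s p y = 0 := by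
    intro l s
    have : ∀ z : Vec n, z ≠ 0 → Xup E α l p z = Xup E α l p y := fun z hz =>
      Xup_congr (gmat_congr hφ.toTwoHomog hz hy (hess z hz)) l
    rw [XupD, pdy, fderiv_apply_congr this _ hy]
    simp
  have hW : ∀ l, Wup E α l p y = 0 := fun l => by simp [Wup, hXD]
  refine ⟨by simp [gramEtaW, hW, hXD], fun hli => hli.ne_zero 1 ?_⟩
  funext l
  simpa using hW l

end FinslerConformal
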